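/- arXiv:2605.00996 — 5 statements merged into one kernel-verified Lean document; each statement's English description precedes it below -/
import Mathlib

section
/- Let m ≥ 1 be a fixed integer and let c = 1. There exists s0 = s0(m) such that for all integers s ≥ s0, setting n = ms + 1 and ℓ = s − 1, the families Q(m,s,ℓ) and W(m,s,ℓ) are the only shifted families attaining the maximum size among families F ⊆ 2^{[n]} with ν(F) < s: if F ⊆ 2^{[n]} is shifted, ν(F) < s, and |F| = |Q(m,s,ℓ)|, then F = Q(m,s,ℓ) or F = W(m,s,ℓ). -/
/-!
Write `m = k + 1` and `n = (k + 1) * s + 1`. Let `U` be the family of all subsets of `[n]` lying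
above a nonempty member of `F` in the domination order: `A` lies below `B` when some injection
`A → B` moves no element upwards. Because `F` is shifted, a matching of `r` sets of `U` shrinks to a
matching of `r` nonempty sets of `F` (`hasMatching_of_upc`), so passing to `U` costs nothing, and
`U` misses at most as many subsets of `[n]` as `Q` does (or one more, if `∅ ∈ F`). That number is
`4 * C(ms - 2, k)` plus lower order terms (`Qfam_compl_card_le`).

The engine is a counting argument. Suppose that `A ∪ B ∉ U` for every `k`-subset `A` of an interval
containing all but `O(1)` points of `[n]` and for each of five sets `B` supported on the last few
points. Then about `5 * C(ms, k)` sets are missing, too many when `s` is large (`count_missing`,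
`numeric`). As a first consequence, every `R ⊆ [n - 3]` with `|R| = (k + 1) * r`, `r ≥ s - 3`, is
perfectly matched by `(k + 1)`-element members of `U` (`matchIn_of_card`): repeatedly remove the
largest element of `R` together with `k` small ones. If such a block were not in `U`, all
unions of `A`, in a suitable range of larger points, with at most one point behind `A` would be
missing (`block_mem`).

Assume `∅ ∉ F`. If `U ⊄ W`, then `[k] ∪ {n - 1, n} ∈ U`; since `U` has no `s`-matching, no set
`A ∪ {n - 2}` with `A ⊆ (k, n - 3]`, `|A| = k`, lies in `U`, hence neither do `A`, `A ∪ {n - 1}`,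
`A ∪ {n}`. If moreover `U ⊄ Q`, then one of `[k - 1] ∪ {n - 2, n - 1, n}` and `[k] ∪ {n - 2}`
lies in `U`. The former extends at once to an `s`-matching. The latter forces
`A ∪ {n - 1, n} ∉ U`, a fifth missing set for each `A`, which is impossible. So `U ⊆ Q` or
`U ⊆ W` (`subset_or_subset`), and the same holds for `F ⊆ U`. As `|W| ≤ |Q| = |F|`
(`Wfam_card_le`), the inclusion is an equality.

If `∅ ∈ F`, then `∅` can be added to any matching of nonempty sets, so `U` has no
`(s - 1)`-matching. Pairing complementary subsets of the last four points yields eight missing sets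
for each `A`, again too many (`hasMatching_pred`).
-/

open Finset

/-- The ground set `[n] = {1, …, n}`. -/
def ground (n : ℕ) : Finset ℕ := Finset.Icc 1 n

/-- `F` contains a matching of size `s`: `s` pairwise disjoint member sets. -/
def HasMatching (F : Finset (Finset ℕ)) (s : ℕ) : Prop :=
  ∃ M ⊆ F, M.card = s ∧ (M : Set (Finset ℕ)).PairwiseDisjoint id

/-- `A = (a₁ < … < a_k)` can be shifted to `B = (b₁ < … < b_k)`: same size and `bᵢ ≤ aᵢ`. -/
def CanShiftTo (A B : Finset ℕ) : Prop :=
  ∃ h : B.card = A.card, ∀ i : Fin A.card,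
    B.orderEmbOfFin h i ≤ A.orderEmbOfFin (rfl : A.card = A.card) i

/-- A family of subsets of the positive integers is shifted. -/
def IsShifted (F : Finset (Finset ℕ)) : Prop :=
  ∀ A ∈ F, ∀ B : Finset ℕ, 0 ∉ B → CanShiftTo A B → B ∈ F

/-- `Q(m,s,ℓ) = {P ⊆ [ms+c] : |P| + |P ∩ [ms−c−1]| ≥ 2m}` where `ℓ = s − c`. -/
def Qfam (m s c : ℕ) : Finset (Finset ℕ) :=
  (ground (m * s + c)).powerset.filter
    (fun P => 2 * m ≤ P.card + (P ∩ ground (m * s - c - 1)).card)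

/-- `W(m,s,ℓ) = {P ⊆ [ms+c] : |P ∩ [ms−1]| ≥ m}`. -/
def Wfam (m s c : ℕ) : Finset (Finset ℕ) :=
  (ground (m * s + c)).powerset.filter
    (fun P => m ≤ (P ∩ ground (m * s - 1)).card)

/-- `P(m,s,ℓ) = {P ⊆ [ms+c] : |P| + |P ∩ [ℓ−1]| ≥ m+1}` where `ℓ = s − c`. -/
def Pfam (m s c : ℕ) : Finset (Finset ℕ) :=
  (ground (m * s + c)).powerset.filter
    (fun P => m + 1 ≤ P.card + (P ∩ ground (s - c - 1)).card)

/-- `P'(m,s,ℓ) = ⋃_{i=m+1}^n ([n] choose i) ∪ ([mℓ−1] choose m)` where `ℓ = s − c`. -/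
def P'fam (m s c : ℕ) : Finset (Finset ℕ) :=
  (ground (m * s + c)).powerset.filter
    (fun P => m + 1 ≤ P.card ∨ (P.card = m ∧ P ⊆ ground (m * (s - c) - 1)))

/-- The deletion number `d(F)`: the least size of a set `X ⊆ [n]` whose removal kills
all `ℓ`-matchings in the `m`-th layer of `F`. -/
noncomputable def delNum (n m ℓ : ℕ) (F : Finset (Finset ℕ)) : ℕ :=
  sInf {d : ℕ | ∃ X ⊆ ground n, X.card = d ∧
    ¬ HasMatching (F.filter (fun A => A.card = m ∧ A ⊆ ground n \ X)) ℓ}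

/-- `y_F(i)`: the number of `i`-element subsets of `[n]` not in `F`. -/
def yF (n : ℕ) (F : Finset (Finset ℕ)) (i : ℕ) : ℕ :=
  (((ground n).powerset.filter (fun A => A.card = i)) \ F).card

/-! ### The domination order and the reduction to up-sets -/

/-- Domination order: some injection of `A` into `B` moves no element upwards. Equivalently, `B` has
a subset of size `|A|` to which `A` can be shifted. -/
def Dom (A B : Finset ℕ) : Prop :=
  ∃ f : ℕ → ℕ, Set.InjOn f A ∧ (∀ a ∈ A, f a ∈ B) ∧ ∀ a ∈ A, f a ≤ a

lemma Dom.of_subset {A B : Finset ℕ} (h : A ⊆ B) : Dom A B :=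
  ⟨id, Set.injOn_id _, fun _ ha => h ha, fun _ _ => le_rfl⟩

lemma Dom.trans {A B C : Finset ℕ} (h₁ : Dom A B) (h₂ : Dom B C) : Dom A C := by
  obtain ⟨f, hf, hfB, hfl⟩ := h₁
  obtain ⟨g, hg, hgC, hgl⟩ := h₂
  exact ⟨g ∘ f, hg.comp hf hfB, fun a ha => hgC _ (hfB a ha),
    fun a ha => (hgl _ (hfB a ha)).trans (hfl a ha)⟩

lemma Dom.union {A A' B B' : Finset ℕ} (h₁ : Dom A A') (h₂ : Dom B B')
    (hd : Disjoint A' B') : Dom (A ∪ B) (A' ∪ B') := by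
  obtain ⟨f, hf, hfA, hfl⟩ := h₁
  obtain ⟨g, hg, hgB, hgl⟩ := h₂
  have hne : ∀ x ∈ A', ∀ y ∈ B', x ≠ y := fun x hx y hy => disjoint_iff_ne.1 hd x hx y hy
  refine ⟨fun x => if x ∈ A then f x else g x, ?_, ?_, ?_⟩
  · intro x hx y hy hxy
    simp only [coe_union, Set.mem_union, mem_coe] at hx hy
    by_cases hxA : x ∈ A <;> by_cases hyA : y ∈ A <;> simp only [hxA, hyA, if_true, if_false] at hxy
    · exact hf hxA hyA hxy
    · exact absurd hxy (hne _ (hfA x hxA) _ (hgB y (hy.resolve_left hyA)))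
    · exact absurd hxy.symm (hne _ (hfA y hyA) _ (hgB x (hx.resolve_left hxA)))
    · exact hg (hx.resolve_left hxA) (hy.resolve_left hyA) hxy
  · intro x hx
    rw [mem_union] at hx ⊢
    by_cases hxA : x ∈ A
    · simp only [hxA, if_true]; exact Or.inl (hfA x hxA)
    · simp only [hxA, if_false]; exact Or.inr (hgB x (hx.resolve_left hxA))
  · intro x hx
    rw [mem_union] at hx
    by_cases hxA : x ∈ A
    · simp only [hxA, if_true]; exact hfl x hxA
    · simp only [hxA, if_false]; exact hgl x (hx.resolve_left hxA)

lemma Dom.of_le {A B : Finset ℕ} (hc : A.card ≤ B.card) (h : ∀ a ∈ A, ∀ b ∈ B, b ≤ a) :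
    Dom A B := by
  obtain ⟨B', hB', hcard⟩ := exists_subset_card_eq hc
  have e := Finset.equivOfCardEq hcard.symm
  refine ⟨fun x => if hx : x ∈ A then e ⟨x, hx⟩ else 0, ?_, ?_, ?_⟩
  · intro x hx y hy hxy
    simp only [mem_coe] at hx hy
    simp only [hx, hy, dif_pos] at hxy
    have := e.injective (Subtype.ext hxy)
    simpa using this
  · intro x hx
    simp only [hx, dif_pos]
    exact hB' (e ⟨x, hx⟩).2
  · intro x hx
    simp only [hx, dif_pos]
    exact h x hx _ (hB' (e ⟨x, hx⟩).2)

lemma Dom.initial {A : Finset ℕ} {r : ℕ} (h0 : 0 ∉ A) (hr : A.card ≤ r) : Dom A (Ioc 0 r) := by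
  refine ⟨fun a => (A.filter (· ≤ a)).card, ?_, ?_, ?_⟩
  · intro a ha b hb hab
    simp only [mem_coe] at ha hb
    by_contra hne
    rcases lt_or_gt_of_ne hne with hlt | hlt
    · have : A.filter (· ≤ a) ⊂ A.filter (· ≤ b) := by
        rw [Finset.ssubset_iff_of_subset]
        · exact ⟨b, by simp [hb], by simp; omega⟩
        · intro x; simp only [mem_filter]; rintro ⟨hx, hxa⟩; exact ⟨hx, by omega⟩
      have := card_lt_card this
      simp only at hab; omega
    · have : A.filter (· ≤ b) ⊂ A.filter (· ≤ a) := by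
        rw [Finset.ssubset_iff_of_subset]
        · exact ⟨a, by simp [ha], by simp; omega⟩
        · intro x; simp only [mem_filter]; rintro ⟨hx, hxa⟩; exact ⟨hx, by omega⟩
      have := card_lt_card this
      simp only at hab; omega
  · intro a ha
    rw [mem_Ioc]
    exact ⟨card_pos.2 ⟨a, by simp [ha]⟩, (card_filter_le _ _).trans hr⟩
  · intro a ha
    have : A.filter (· ≤ a) ⊆ Ioc 0 a := by
      intro x hx
      rw [mem_filter] at hx
      rw [mem_Ioc]
      refine ⟨Nat.pos_of_ne_zero ?_, hx.2⟩
      rintro rfl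
      exact h0 hx.1
    simpa using card_le_card this

/-- A shifted family is closed under images by injections that move no element upwards; the
positions in the sorted orders need not correspond under the injection. -/
lemma IsShifted.image_mem {F : Finset (Finset ℕ)} (hF : IsShifted F) {A : Finset ℕ} (hA : A ∈ F)
    {f : ℕ → ℕ} (hf : Set.InjOn f A) (hle : ∀ a ∈ A, f a ≤ a) (h0 : 0 ∉ A.image f) :
    A.image f ∈ F := by
  have hc : (A.image f).card = A.card := card_image_of_injOn hf
  refine hF A hA _ h0 ⟨hc, fun i => ?_⟩
  by_contra hlt
  push Not at hlt
  -- the images of the `i + 1` smallest elements of `A` would all precede the `i`-th element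
  -- of `A.image f`
  set a := A.orderEmbOfFin (rfl : A.card = A.card) with ha
  set b := (A.image f).orderEmbOfFin hc with hb
  have hsub : (Finset.Iic i).image (fun j => f (a j)) ⊆ (Finset.Iio i).image b := by
    intro x hx
    obtain ⟨j, hj, rfl⟩ := mem_image.1 hx
    have hjA : a j ∈ A := orderEmbOfFin_mem _ _ _
    have hmem : f (a j) ∈ Set.range b := by
      rw [hb, range_orderEmbOfFin]
      exact mem_coe.2 (mem_image_of_mem f hjA)
    obtain ⟨l, hl⟩ := hmem
    refine mem_image.2 ⟨l, ?_, hl⟩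
    rw [mem_Iio, ← b.lt_iff_lt, hl]
    exact ((hle _ hjA).trans (a.le_iff_le.2 (mem_Iic.1 hj))).trans_lt hlt
  have h1 := card_le_card hsub
  rw [card_image_of_injective _ b.injective, card_image_of_injOn] at h1
  · simp at h1
  · intro x _ y _ hxy
    exact a.injective (hf (orderEmbOfFin_mem _ _ _) (orderEmbOfFin_mem _ _ _) hxy)

/-- An up-set of the domination order on the subsets of `[n]`, not containing `∅` (equivalently,
not all of `2^[n]`). -/
structure IsUp (n : ℕ) (U : Finset (Finset ℕ)) : Prop where
  sub : U ⊆ (ground n).powerset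
  empty : ∅ ∉ U
  up : ∀ A ∈ U, ∀ B ⊆ ground n, Dom A B → B ∈ U

open Classical in
/-- The up-closure, in the domination order on subsets of `[n]`, of the nonempty members of `F`. -/
noncomputable def upc (n : ℕ) (F : Finset (Finset ℕ)) : Finset (Finset ℕ) :=
  (ground n).powerset.filter (fun B => ∃ A ∈ F, A.Nonempty ∧ Dom A B)

lemma mem_upc {n : ℕ} {F : Finset (Finset ℕ)} {B : Finset ℕ} :
    B ∈ upc n F ↔ B ⊆ ground n ∧ ∃ A ∈ F, A.Nonempty ∧ Dom A B := by
  simp [upc]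

lemma isUp_upc (n : ℕ) (F : Finset (Finset ℕ)) : IsUp n (upc n F) where
  sub := fun B hB => mem_powerset.2 (mem_upc.1 hB).1
  empty := by
    rw [mem_upc]
    rintro ⟨-, A, -, ⟨a, ha⟩, f, -, hf, -⟩
    simpa using hf a ha
  up := by
    intro A hA B hB hAB
    obtain ⟨-, A₀, hA₀, hne, hd⟩ := mem_upc.1 hA
    exact mem_upc.2 ⟨hB, A₀, hA₀, hne, hd.trans hAB⟩

/-- Each member of the up-closure of a shifted family contains a nonempty member of the family, so
matchings of the up-closure shrink to matchings of the family of the same size. -/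
lemma hasMatching_of_upc {n r : ℕ} {F : Finset (Finset ℕ)} (hF : IsShifted F)
    (h : HasMatching (upc n F) r) : HasMatching (F.erase ∅) r := by
  obtain ⟨M, hM, hc, hd⟩ := h
  have key : ∀ B ∈ M, ∃ A ∈ F, A.Nonempty ∧ A ⊆ B := by
    intro B hB
    obtain ⟨hBg, A, hA, hne, f, hf, hfB, hfl⟩ := mem_upc.1 (hM hB)
    have hsub : A.image f ⊆ B := by
      intro x hx
      obtain ⟨a, ha, rfl⟩ := mem_image.1 hx
      exact hfB a ha
    refine ⟨A.image f, hF.image_mem hA hf hfl ?_, hne.image f, hsub⟩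
    intro h0
    have := hBg (hsub h0)
    simp [ground] at this
  choose! g hgF hgne hgB using key
  have hdis : ∀ B ∈ M, ∀ B' ∈ M, B ≠ B' → Disjoint (g B) (g B') := fun B hB B' hB' hne =>
    disjoint_of_subset_left (hgB B hB) (disjoint_of_subset_right (hgB B' hB')
      (hd (mem_coe.2 hB) (mem_coe.2 hB') hne))
  refine ⟨M.image g, ?_, ?_, ?_⟩
  · intro x hx
    obtain ⟨B, hB, rfl⟩ := mem_image.1 hx
    exact mem_erase.2 ⟨(hgne B hB).ne_empty, hgF B hB⟩
  · rw [card_image_of_injOn, hc]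
    intro B hB B' hB' heq
    by_contra hne
    have := hdis B hB B' hB' hne
    rw [heq, disjoint_self_iff_empty] at this
    exact (hgne B' hB').ne_empty this
  · intro x hx y hy hxy
    obtain ⟨B, hB, rfl⟩ := mem_image.1 (mem_coe.1 hx)
    obtain ⟨B', hB', rfl⟩ := mem_image.1 (mem_coe.1 hy)
    exact hdis B hB B' hB' (fun h => hxy (by rw [h]))

/-- `U` contains a matching of size `r` all of whose sets lie in `R`. -/
def MatchIn (U : Finset (Finset ℕ)) (R : Finset ℕ) (r : ℕ) : Prop :=
  ∃ M ⊆ U, M.card = r ∧ (M : Set (Finset ℕ)).PairwiseDisjoint id ∧ ∀ B ∈ M, B ⊆ R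

lemma MatchIn.hasMatching {U : Finset (Finset ℕ)} {R : Finset ℕ} {r : ℕ} (h : MatchIn U R r) :
    HasMatching U r := by
  obtain ⟨M, h1, h2, h3, -⟩ := h
  exact ⟨M, h1, h2, h3⟩

lemma MatchIn.insert {n : ℕ} {U : Finset (Finset ℕ)} (hU : IsUp n U) {R V : Finset ℕ} {r : ℕ}
    (h : MatchIn U R r) (hV : V ∈ U) (hd : Disjoint V R) : MatchIn U (V ∪ R) (r + 1) := by
  obtain ⟨M, h1, h2, h3, h4⟩ := h
  have hVne : V ≠ ∅ := fun h => hU.empty (h ▸ hV)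
  refine ⟨Insert.insert V M, insert_subset hV h1, ?_, ?_, ?_⟩
  · rw [card_insert_of_notMem, h2]
    intro hVM
    exact hVne ((disjoint_self_iff_empty _).1 (disjoint_of_subset_right (h4 V hVM) hd))
  · rw [coe_insert]
    refine h3.insert ?_
    intro B hB _
    exact disjoint_of_subset_right (h4 B (mem_coe.1 hB)) hd
  · intro B hB
    rcases mem_insert.1 hB with rfl | hB
    · exact subset_union_left
    · exact (h4 B hB).trans subset_union_right

/-! ### Counting missing sets, and perfect matchings of large sets -/

/-- If `A ∪ B` is missing from `U` for all `k`-subsets `A` of `(lo, p]` and all `B ∈ K`, where the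
sets in `K` live on `(p, n]`, then `|K| * C(p - lo, k)` sets are missing, since `A` and `B` are
determined by `A ∪ B`. -/
lemma count_missing {U : Finset (Finset ℕ)} {n k lo p : ℕ} (hp : p ≤ n)
    (K : Finset (Finset ℕ)) (hK : ∀ B ∈ K, B ⊆ Ioc p n)
    (h : ∀ A ⊆ Ioc lo p, A.card = k → ∀ B ∈ K, A ∪ B ∉ U) :
    K.card * (p - lo).choose k ≤ ((ground n).powerset \ U).card := by
  have hc : (K ×ˢ powersetCard k (Ioc lo p)).card = K.card * (p - lo).choose k := by
    rw [card_product, card_powersetCard, Nat.card_Ioc]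
  rw [← hc]
  refine card_le_card_of_injOn (fun x => x.2 ∪ x.1) ?_ ?_
  · rintro ⟨B, A⟩ hx
    obtain ⟨hB, hA⟩ := mem_product.1 (mem_coe.1 hx)
    obtain ⟨hA1, hA2⟩ := mem_powersetCard.1 hA
    refine mem_coe.2 (mem_sdiff.2 ⟨mem_powerset.2 ?_, h A hA1 hA2 B hB⟩)
    intro x hx
    simp only [ground, mem_Icc]
    rcases mem_union.1 hx with hx | hx
    · have := mem_Ioc.1 (hA1 hx); omega
    · have := mem_Ioc.1 (hK B hB hx); omega
  · have hrec : ∀ B ∈ K, ∀ A ⊆ Ioc lo p,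
        (A ∪ B).filter (· ≤ p) = A ∧ (A ∪ B).filter (p < ·) = B := by
      intro B hB A hA
      constructor
      · ext x
        simp only [mem_filter, mem_union]
        constructor
        · rintro ⟨h1 | h1, h2⟩
          · exact h1
          · have := mem_Ioc.1 (hK B hB h1); omega
        · intro h1
          exact ⟨Or.inl h1, (mem_Ioc.1 (hA h1)).2⟩
      · ext x
        simp only [mem_filter, mem_union]
        constructor
        · rintro ⟨h1 | h1, h2⟩
          · have := mem_Ioc.1 (hA h1); omega
          · exact h1
        · intro h1
          exact ⟨Or.inr h1, (mem_Ioc.1 (hK B hB h1)).1⟩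
    rintro ⟨B, A⟩ hx ⟨B', A'⟩ hx' heq
    obtain ⟨hB, hA⟩ := mem_product.1 (mem_coe.1 hx)
    obtain ⟨hB', hA'⟩ := mem_product.1 (mem_coe.1 hx')
    obtain ⟨e1, e2⟩ := hrec B hB A (mem_powersetCard.1 hA).1
    obtain ⟨e3, e4⟩ := hrec B' hB' A' (mem_powersetCard.1 hA').1
    simp only at heq
    rw [heq] at e1 e2
    rw [Prod.mk.injEq]
    exact ⟨e2.symm.trans e4, e1.symm.trans e3⟩

/-- A set formed by `k` elements among the lowest `k * (j + 1) + 3 * k + 1` points and a point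
`t ≤ n - d - j` lies in `U`. Otherwise no union of a `k`-set of larger points with `∅` or with
one of the last `d + min j T + 1` points does. For `j ≤ T` the `k`-sets range over almost all of
`[n]` and the bound `h1` is violated; for `j > T` they range over fewer points, but there are at
least `T` tail sets and the bound `h2` is violated. -/
lemma block_mem {U : Finset (Finset ℕ)} {n k s d T j t : ℕ} (hn : n = (k + 1) * s + 1)
    (hd3 : 3 ≤ d) (hd4 : d ≤ 4) (hs : T + 3 * k + 10 ≤ s) (hU : IsUp n U)
    (h1 : ((ground n).powerset \ U).card <
      (d + 2) * ((k + 1) * (s - (T + 3 * k + 10))).choose k)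
    (h2 : ((ground n).powerset \ U).card < T * (s - (T + 3 * k + 10)).choose k)
    (hj : j < s) {L : Finset ℕ} (hL : L ⊆ Ioc 0 (k * (j + 1) + 3 * k + 1)) (hLc : L.card = k)
    (ht : t ≤ n - d - j) (ht0 : 0 < t) (htL : t ∉ L) : Insert.insert t L ∈ U := by
  by_contra hcon
  obtain ⟨w, rfl⟩ := Nat.exists_eq_add_of_le hs
  set s := T + 3 * k + 10 + w with hsdef
  have hkj : k * (j + 1) ≤ k * s := Nat.mul_le_mul_left k hj
  have hks : (k + 1) * s = k * s + s := by ring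
  -- capping `j` at `T` keeps the range `(b, p]` of the `k`-sets long enough
  set q := min j T with hq
  set b := k * (j + 1) + 3 * k + 1 with hb
  set p := n - d - q - 1 with hp
  have hqj : q ≤ j := min_le_left _ _
  have hqT : q ≤ T := min_le_right _ _
  have hpn : p + (d + q + 1) = n := by omega
  have hinj : Function.Injective (fun y : ℕ => ({y} : Finset ℕ)) := singleton_injective
  have hKc : (Insert.insert ∅ ((Ioc p n).image (fun y => ({y} : Finset ℕ)))).card
      = d + q + 2 := by
    rw [card_insert_of_notMem, card_image_of_injective _ hinj, Nat.card_Ioc]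
    · omega
    · simp
  have hcount := count_missing (U := U) (n := n) (k := k) (lo := b) (p := p) (by omega)
    (Insert.insert ∅ ((Ioc p n).image (fun y => ({y} : Finset ℕ)))) (by
      intro B hB
      rcases mem_insert.1 hB with rfl | hB
      · simp
      · obtain ⟨y, hy, rfl⟩ := mem_image.1 hB
        simpa using hy) (by
      intro A hA hAc B hB hmem
      apply hcon
      refine hU.up _ hmem _ ?_ ?_
      · intro x hx
        simp only [ground, mem_Icc]
        rcases mem_insert.1 hx with rfl | hx
        · omega
        · have := mem_Ioc.1 (hL hx); omega
      · rw [insert_eq, union_comm {t}]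
        refine Dom.union (Dom.of_le (by omega) ?_) (Dom.of_le ?_ ?_) (by simpa using htL)
        · intro x hx y hy
          have := mem_Ioc.1 (hL hy)
          have := mem_Ioc.1 (hA hx)
          omega
        · rcases mem_insert.1 hB with rfl | hB
          · simp
          · obtain ⟨y, hy, rfl⟩ := mem_image.1 hB
            simp
        · intro x hx y hy
          rcases mem_insert.1 hB with rfl | hB
          · simp at hx
          · obtain ⟨z, hz, rfl⟩ := mem_image.1 hB
            have := mem_Ioc.1 hz
            simp only [mem_singleton] at hx hy
            omega)
  rw [hKc] at hcount
  have hw : s - (T + 3 * k + 10) = w := by omega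
  rw [hw] at h1 h2
  rcases le_or_gt j T with hjT | hjT
  · have hle : (k + 1) * w ≤ p - b := by
      have e1 : (k + 1) * s = (k + 1) * w + (k + 1) * (T + 3 * k + 10) := by rw [hsdef]; ring
      have e2 : k * (j + 1) ≤ k * (T + 1) := Nat.mul_le_mul_left k (by omega)
      have e3 : (k + 1) * (T + 3 * k + 10) = k * (T + 1) + T + 3 * k * k + 12 * k + 10 := by ring
      have e4 : 0 ≤ 3 * k * k := Nat.zero_le _
      generalize 3 * k * k = z at *
      omega
    have := Nat.mul_le_mul (show d + 2 ≤ d + q + 2 by omega) (Nat.choose_le_choose k hle)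
    omega
  · have hle : w ≤ p - b := by omega
    have := Nat.mul_le_mul (show T ≤ d + q + 2 by omega) (Nat.choose_le_choose k hle)
    omega

/-- A set `R` of size `(k + 1) * r` avoiding the last `d + j` points is perfectly matched by `U`. The
parameter `j` counts the blocks removed so far: each step removes the largest element of `R`
along with `k` small ones. These exist because `r + j ≥ s - 3`, so that `R` omits few points of
`[n - d - j]`. -/
lemma matchIn_of_card {U : Finset (Finset ℕ)} {n k s d T : ℕ} (hn : n = (k + 1) * s + 1)
    (hd3 : 3 ≤ d) (hd4 : d ≤ 4) (hs : T + 3 * k + 10 ≤ s) (hU : IsUp n U)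
    (h1 : ((ground n).powerset \ U).card <
      (d + 2) * ((k + 1) * (s - (T + 3 * k + 10))).choose k)
    (h2 : ((ground n).powerset \ U).card < T * (s - (T + 3 * k + 10)).choose k) (r : ℕ) :
    ∀ (j : ℕ) (R : Finset ℕ), R ⊆ Ioc 0 (n - d - j) → R.card = (k + 1) * r →
      s ≤ r + j + 3 → r + j ≤ s → MatchIn U R r := by
  induction r with
  | zero => exact fun j R _ _ _ _ => ⟨∅, by simp, by simp, by simp, by simp⟩
  | succ r ih =>
    intro j R hR hRc hj1 hj2
    have hRne : R.Nonempty := card_pos.1 (by rw [hRc]; positivity)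
    set t := R.max' hRne with ht
    have htR : t ∈ R := max'_mem _ _
    have htle := mem_Ioc.1 (hR htR)
    set b := k * (j + 1) + 3 * k + 1 with hb
    -- `R` has at least `k` elements in `[b]` besides its maximum
    have hcard : k ≤ ((R.erase t).filter (· ≤ b)).card := by
      rcases le_or_gt t b with htb | htb
      · rw [filter_true_of_mem, card_erase_of_mem htR, hRc]
        · have : (k + 1) * (r + 1) = k * r + k + r + 1 := by ring
          omega
        · intro x hx
          exact (le_max' R x (mem_of_mem_erase hx)).trans htb
      · have hsplit : R ⊆ (R.erase t).filter (· ≤ b) ∪ Ioc b (n - d - j) := by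
          intro x hx
          rw [mem_union, mem_filter, mem_erase, mem_Ioc]
          have := mem_Ioc.1 (hR hx)
          rcases le_or_gt x b with h | h
          · exact Or.inl ⟨⟨by omega, hx⟩, h⟩
          · exact Or.inr ⟨h, this.2⟩
        have h3 := (card_le_card hsplit).trans (card_union_le _ _)
        rw [Nat.card_Ioc, hRc] at h3
        have e1 : (k + 1) * (s - 3 - j) ≤ (k + 1) * (r + 1) :=
          Nat.mul_le_mul_left _ (by omega)
        rcases le_or_gt (j + 3) s with hjs | hjs
        · obtain ⟨v, hv⟩ := Nat.exists_eq_add_of_le hjs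
          have e2 : s - 3 - j = v := by omega
          have e3 : (k + 1) * s = (k + 1) * v + k * j + j + 3 * k + 3 := by rw [hv]; ring
          have e4 : k * (j + 1) = k * j + k := by ring
          rw [e2] at e1
          omega
        · have e3 : (k + 1) * s = k * s + s := by ring
          have e4 : k * s ≤ k * (j + 2) := Nat.mul_le_mul_left _ (by omega)
          have e5 : k * (j + 2) = k * (j + 1) + k := by ring
          have e6 : (k + 1) * (r + 1) = k * r + k + r + 1 := by ring
          omega
    obtain ⟨L, hLsub, hLc⟩ := exists_subset_card_eq hcard
    have hLR : L ⊆ R := fun x hx => mem_of_mem_erase (mem_filter.1 (hLsub hx)).1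
    have htL : t ∉ L := fun h => by simpa using hLsub h
    have hmem : Insert.insert t L ∈ U := by
      refine block_mem hn hd3 hd4 hs hU h1 h2 (j := j) (by omega) ?_ hLc htle.2 htle.1 htL
      intro x hx
      exact mem_Ioc.2 ⟨(mem_Ioc.1 (hR (hLR hx))).1, (mem_filter.1 (hLsub hx)).2⟩
    have hsubR : Insert.insert t L ⊆ R := insert_subset htR hLR
    have hM := ih (j + 1) (R \ Insert.insert t L) ?_ ?_ (by omega) (by omega)
    · have := hM.insert hU hmem disjoint_sdiff
      rwa [union_sdiff_of_subset hsubR] at this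
    · intro x hx
      obtain ⟨hxR, hxn⟩ := mem_sdiff.1 hx
      have h3 := le_max' R x hxR
      have h4 : x ≠ t := fun h => hxn (by simp [h])
      have := mem_Ioc.1 (hR hxR)
      rw [mem_Ioc]
      omega
    · rw [card_sdiff_of_subset hsubR, card_insert_of_notMem htL, hLc, hRc]
      have : (k + 1) * (r + 1) = (k + 1) * r + (k + 1) := by ring
      omega

/-! ### Estimates for binomial coefficients and for the two extremal families -/

lemma pow_mul_choose_le (m x k : ℕ) (hm : 1 ≤ m) : m ^ k * x.choose k ≤ (m * x).choose k := by
  have key : m ^ k * x.descFactorial k ≤ (m * x).descFactorial k := by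
    induction k with
    | zero => simp
    | succ k ih =>
      rw [Nat.descFactorial_succ, Nat.descFactorial_succ]
      have h1 : m * (x - k) ≤ m * x - k := by
        rw [Nat.mul_sub]
        have : k ≤ m * k := Nat.le_mul_of_pos_left k hm
        omega
      calc m ^ (k + 1) * ((x - k) * x.descFactorial k)
          = (m * (x - k)) * (m ^ k * x.descFactorial k) := by ring
        _ ≤ _ := Nat.mul_le_mul h1 ih
  rw [Nat.descFactorial_eq_factorial_mul_choose, Nat.descFactorial_eq_factorial_mul_choose] at key
  have : k.factorial * (m ^ k * x.choose k) ≤ k.factorial * (m * x).choose k := by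
    calc _ = m ^ k * (k.factorial * x.choose k) := by ring
      _ ≤ _ := key
  exact Nat.le_of_mul_le_mul_left this (Nat.factorial_pos k)

open Filter Topology in
/-- After division by `s ^ k / k!`, the left side tends to `4 * (k + 1) ^ k` and the right side to
`5 * (k + 1) ^ k`. -/
lemma numeric (k C : ℕ) : ∀ᶠ s : ℕ in atTop,
    4 * ((k + 1) * s - 2).choose k + 8 * ∑ i ∈ range k, ((k + 1) * s - 2).choose i
      < 5 * ((k + 1) ^ k * (s - C).choose k) := by
  have hlin : ∀ c : ℕ, Tendsto (fun s : ℕ => ((s - c : ℕ) : ℝ) / s) atTop (𝓝 1) := by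
    intro c
    have h : Tendsto (fun s : ℕ => 1 - (c : ℝ) / s) atTop (𝓝 (1 - 0)) :=
      tendsto_const_nhds.sub (tendsto_const_div_atTop_nhds_zero_nat _)
    rw [sub_zero] at h
    refine h.congr' ?_
    filter_upwards [eventually_ge_atTop (c + 1)] with s hs
    have hs0 : s ≠ 0 := by omega
    have : (s : ℝ) ≠ 0 := by exact_mod_cast hs0
    rw [Nat.cast_sub (by omega)]
    field_simp
  have hlim : Tendsto (fun s : ℕ => 5 * ((k + 1 : ℝ) ^ k * (((s - (C + k) : ℕ) : ℝ) / s) ^ k)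
      - (8 * k * k.factorial * (k + 1) ^ k) / s) atTop
      (𝓝 (5 * ((k + 1 : ℝ) ^ k * 1 ^ k) - 0)) :=
    ((((hlin (C + k)).pow k).const_mul _).const_mul _).sub
      (tendsto_const_div_atTop_nhds_zero_nat _)
  have hlt : 4 * (k + 1 : ℝ) ^ k < 5 * ((k + 1 : ℝ) ^ k * 1 ^ k) - 0 := by
    have : (0 : ℝ) < (k + 1 : ℝ) ^ k := by positivity
    simp; linarith
  filter_upwards [hlim.eventually_const_lt hlt, eventually_ge_atTop (C + k + 1)] with s hs hsC
  have hs0 : (0 : ℝ) < s := by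
    have : 0 < s := by omega
    exact_mod_cast this
  have hfac : (0 : ℝ) < k.factorial := by positivity
  set N := (k + 1) * s - 2 with hN
  have hNle : (N : ℝ) ≤ (k + 1) * s := by
    have : N ≤ (k + 1) * s := by omega
    exact_mod_cast this
  have hms1 : (1 : ℝ) ≤ (k + 1) * s := by
    have : 1 ≤ (k + 1) * s := Nat.mul_pos (by omega) (by omega)
    exact_mod_cast this
  have hA : (k.factorial : ℝ) * N.choose k ≤ ((k + 1) * s) ^ k := by
    have h1 : (k.factorial : ℝ) * N.choose k ≤ (N : ℝ) ^ k := by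
      have := Nat.descFactorial_le_pow N k
      rw [Nat.descFactorial_eq_factorial_mul_choose] at this
      exact_mod_cast this
    exact h1.trans (pow_le_pow_left₀ (by positivity) hNle k)
  have hB : (∑ i ∈ range k, (N.choose i : ℝ)) * s ≤ k * ((k + 1) * s) ^ k := by
    rw [sum_mul]
    have : ∀ i ∈ range k, (N.choose i : ℝ) * s ≤ ((k + 1) * s : ℝ) ^ k := by
      intro i hi
      have hi' : i + 1 ≤ k := mem_range.1 hi
      have h1 : (N.choose i : ℝ) ≤ ((k + 1) * s : ℝ) ^ i := by
        have h2 : (N.choose i : ℝ) ≤ (N : ℝ) ^ i := by exact_mod_cast Nat.choose_le_pow N i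
        exact h2.trans (pow_le_pow_left₀ (by positivity) hNle i)
      calc (N.choose i : ℝ) * s ≤ ((k + 1) * s : ℝ) ^ i * ((k + 1) * s) := by
            refine mul_le_mul h1 ?_ hs0.le (by positivity)
            nlinarith [Nat.cast_nonneg (α := ℝ) k]
        _ = ((k + 1) * s : ℝ) ^ (i + 1) := by ring
        _ ≤ _ := pow_le_pow_right₀ hms1 hi'
    simpa using sum_le_sum this
  have hD : ((s - (C + k) : ℕ) : ℝ) ^ k ≤ k.factorial * (s - C).choose k := by
    have h1 := Nat.pow_sub_le_descFactorial (s - C) k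
    rw [Nat.descFactorial_eq_factorial_mul_choose] at h1
    have h2 : (s - (C + k)) ^ k ≤ (s - C + 1 - k) ^ k := Nat.pow_le_pow_left (by omega) k
    exact_mod_cast h2.trans h1
  have hspow : (0 : ℝ) < (s : ℝ) ^ k := by positivity
  -- multiply the limit inequality by `s ^ k`
  have hmul := mul_lt_mul_of_pos_right hs hspow
  have e1 : (5 * ((k + 1 : ℝ) ^ k * (((s - (C + k) : ℕ) : ℝ) / s) ^ k)
      - (8 * k * k.factorial * (k + 1) ^ k) / s) * (s : ℝ) ^ k
      = 5 * ((k + 1 : ℝ) ^ k * ((s - (C + k) : ℕ) : ℝ) ^ k)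
        - 8 * k.factorial * (k * ((k + 1) * s) ^ k / s) := by
    rw [div_pow, mul_pow]
    field_simp
  rw [e1] at hmul
  have hB' : (∑ i ∈ range k, (N.choose i : ℝ)) ≤ k * ((k + 1) * s) ^ k / s := by
    rw [le_div_iff₀ hs0]; exact hB
  have hfin : (k.factorial : ℝ) * (4 * N.choose k + 8 * ∑ i ∈ range k, (N.choose i : ℝ))
      < k.factorial * (5 * ((k + 1) ^ k * (s - C).choose k)) := by
    have h3 : (k + 1 : ℝ) ^ k * ((s - (C + k) : ℕ) : ℝ) ^ k ≤
        (k + 1) ^ k * (k.factorial * (s - C).choose k) :=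
      mul_le_mul_of_nonneg_left hD (by positivity)
    have h4 := mul_le_mul_of_nonneg_left hB' hfac.le
    have h5 : 4 * (k + 1 : ℝ) ^ k * (s : ℝ) ^ k = 4 * ((k + 1) * s) ^ k := by rw [mul_pow]; ring
    linarith
  have := lt_of_mul_lt_mul_left hfin hfac.le
  exact_mod_cast this

/-- `|W| ≤ |Q|`: the identity on `W ∩ Q` extends injectively to `W \ Q` by replacing the
trace `{N + 1}` of a set on the last three points of `[N + 3]` by `{N + 2, N + 3}`. -/
lemma Wfam_card_le (m s : ℕ) (h : 3 ≤ m * s) : (Wfam m s 1).card ≤ (Qfam m s 1).card := by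
  obtain ⟨N, hN⟩ : ∃ N, m * s = N + 2 := ⟨m * s - 2, by omega⟩
  have hW : ∀ P, P ∈ Wfam m s 1 ↔ P ⊆ Icc 1 (N + 3) ∧ m ≤ (P ∩ Icc 1 (N + 1)).card := by
    intro P; simp [Wfam, ground, hN]
  have hQ : ∀ P, P ∈ Qfam m s 1 ↔ P ⊆ Icc 1 (N + 3) ∧ 2 * m ≤ P.card + (P ∩ Icc 1 N).card := by
    intro P; simp [Qfam, ground, hN]
  -- in the exceptional case, `P` meets the last three points exactly in `N + 1`
  have key : ∀ P ∈ Wfam m s 1, P ∉ Qfam m s 1 →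
      (P ∩ Icc 1 N).card + 1 = m ∧ N + 1 ∈ P ∧ N + 2 ∉ P ∧ N + 3 ∉ P := by
    intro P hPW hPQ
    obtain ⟨hP, hm⟩ := (hW P).1 hPW
    have hlt : P.card + (P ∩ Icc 1 N).card < 2 * m := by
      by_contra h'
      exact hPQ ((hQ P).2 ⟨hP, by omega⟩)
    have h1 : (P ∩ Icc 1 (N + 1)).card ≤ P.card := card_le_card inter_subset_left
    have h2 : N + 1 ∈ P := by
      by_contra h'
      have : P ∩ Icc 1 (N + 1) ⊆ P ∩ Icc 1 N := by
        intro x hx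
        simp only [mem_inter, mem_Icc] at hx ⊢
        have : x ≠ N + 1 := fun e => h' (e ▸ hx.1)
        exact ⟨hx.1, by omega⟩
      have := card_le_card this
      omega
    have h3 : P ∩ Icc 1 (N + 1) = insert (N + 1) (P ∩ Icc 1 N) := by
      ext x
      simp only [mem_inter, mem_Icc, mem_insert]
      constructor
      · rintro ⟨h4, h5⟩
        by_cases e : x = N + 1
        · exact Or.inl e
        · exact Or.inr ⟨h4, by omega⟩
      · rintro (rfl | h4)
        · exact ⟨h2, by omega⟩
        · exact ⟨h4.1, by omega⟩
    have h4 : (P ∩ Icc 1 (N + 1)).card = (P ∩ Icc 1 N).card + 1 := by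
      rw [h3, card_insert_of_notMem (by simp)]
    have h5 : ∀ y ∈ P, N + 1 < y → False := by
      intro y hy hlt'
      have : insert y (P ∩ Icc 1 (N + 1)) ⊆ P := insert_subset hy inter_subset_left
      have := card_le_card this
      rw [card_insert_of_notMem (by simp; omega)] at this
      omega
    exact ⟨by omega, h2, fun h' => h5 _ h' (by omega), fun h' => h5 _ h' (by omega)⟩
  classical
  refine card_le_card_of_injOn
    (fun P => if P ∈ Qfam m s 1 then P else P.erase (N + 1) ∪ {N + 2, N + 3}) ?_ ?_
  · intro P hP
    have hP := mem_coe.1 hP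
    by_cases hPQ : P ∈ Qfam m s 1
    · simp [hPQ]
    · simp only [hPQ, if_false]
      obtain ⟨k1, k2, k3, k4⟩ := key P hP hPQ
      have hPs := ((hW P).1 hP).1
      refine mem_coe.2 ((hQ _).2 ⟨?_, ?_⟩)
      · intro x hx
        simp only [mem_union, mem_erase, mem_insert, mem_singleton] at hx
        rcases hx with hx | rfl | rfl
        · exact hPs hx.2
        · simp
        · simp
      · have e1 : P ∩ Icc 1 N ⊆ (P.erase (N + 1) ∪ {N + 2, N + 3}) ∩ Icc 1 N := by
          intro x hx
          simp only [mem_inter, mem_Icc, mem_union, mem_erase] at hx ⊢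
          exact ⟨Or.inl ⟨by omega, hx.1⟩, hx.2⟩
        have e2 : insert (N + 2) (insert (N + 3) (P ∩ Icc 1 N)) ⊆
            P.erase (N + 1) ∪ {N + 2, N + 3} := by
          intro x hx
          simp only [mem_inter, mem_Icc, mem_union, mem_erase, mem_insert, mem_singleton] at hx ⊢
          rcases hx with rfl | rfl | hx
          · simp
          · simp
          · exact Or.inl ⟨by omega, hx.1⟩
        have e1 := card_le_card e1
        have e2 := card_le_card e2
        rw [card_insert_of_notMem (by simp), card_insert_of_notMem (by simp)] at e2
        omega
  · intro P hP P' hP' heq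
    have hP' := mem_coe.1 hP'
    have hP := mem_coe.1 hP
    -- images of the second kind lie outside `Wfam`
    have out : ∀ X ∈ Wfam m s 1, X ∉ Qfam m s 1 →
        X.erase (N + 1) ∪ {N + 2, N + 3} ∉ Wfam m s 1 := by
      intro X hX hXQ hc
      obtain ⟨k1, k2, k3, k4⟩ := key X hX hXQ
      have := ((hW _).1 hc).2
      have e : (X.erase (N + 1) ∪ {N + 2, N + 3}) ∩ Icc 1 (N + 1) ⊆ X ∩ Icc 1 N := by
        intro x hx
        simp only [mem_inter, mem_Icc, mem_union, mem_erase, mem_insert, mem_singleton] at hx ⊢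
        rcases hx with ⟨hx | hx | hx, h1⟩
        · exact ⟨hx.2, by omega⟩
        · omega
        · omega
      have := card_le_card e
      omega
    have back : ∀ X ∈ Wfam m s 1, X ∉ Qfam m s 1 →
        insert (N + 1) ((X.erase (N + 1) ∪ {N + 2, N + 3}) \ {N + 2, N + 3}) = X := by
      intro X hX hXQ
      obtain ⟨k1, k2, k3, k4⟩ := key X hX hXQ
      ext x
      simp only [mem_sdiff, mem_union, mem_erase, mem_insert, mem_singleton]
      constructor
      · rintro (rfl | ⟨h1 | h1, h2⟩)
        · exact k2
        · exact h1.2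
        · exact absurd h1 h2
      · intro hx
        by_cases e : x = N + 1
        · exact Or.inl e
        · refine Or.inr ⟨Or.inl ⟨e, hx⟩, ?_⟩
          rintro (rfl | rfl)
          · exact k3 hx
          · exact k4 hx
    by_cases h1 : P ∈ Qfam m s 1 <;> by_cases h2 : P' ∈ Qfam m s 1 <;>
      simp only [h1, h2, if_true, if_false] at heq
    · exact heq
    · exact absurd (heq ▸ hP) (out P' hP' h2)
    · exact absurd (heq ▸ hP') (out P hP h1)
    · rw [← back P hP h1, heq, back P' hP' h2]

/-- A set outside `Q` has either `k` points in `[ms - 2]` and at most one of the last three points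
of `[n]`, or fewer than `k` points in `[ms - 2]`. -/
lemma Qfam_compl_card_le (k s : ℕ) (h : 2 ≤ (k + 1) * s) :
    ((ground ((k + 1) * s + 1)).powerset \ Qfam (k + 1) s 1).card ≤
      4 * ((k + 1) * s - 2).choose k + 8 * ∑ i ∈ range k, ((k + 1) * s - 2).choose i := by
  obtain ⟨N, hN⟩ : ∃ N, (k + 1) * s = N + 2 := ⟨(k + 1) * s - 2, by omega⟩
  have hN2 : (k + 1) * s - 2 = N := by omega
  rw [hN2, hN]
  set S : Finset (Finset ℕ × Finset ℕ) :=
    powersetCard k (Icc 1 N) ×ˢ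
        ({∅, {N + 1}, {N + 2}, {N + 3}} : Finset (Finset ℕ)) ∪
      ((range k).biUnion fun i => powersetCard i (Icc 1 N)) ×ˢ (Ioc N (N + 3)).powerset with hS
  have hsub : (ground (N + 2 + 1)).powerset \ Qfam (k + 1) s 1 ⊆ S.image (fun x => x.1 ∪ x.2) := by
    intro P hP
    obtain ⟨hPg, hPQ⟩ := mem_sdiff.1 hP
    have hPs : P ⊆ Icc 1 (N + 3) := by simpa [ground] using hPg
    have hlt : P.card + (P ∩ Icc 1 N).card < 2 * (k + 1) := by
      by_contra h'
      exact hPQ (by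
        simp only [Qfam, ground, hN, mem_filter, mem_powerset]
        exact ⟨hPs, by simpa using h'⟩)
    have hsplit : P ∩ Icc 1 N ∪ P ∩ Ioc N (N + 3) = P := by
      ext x
      simp only [mem_union, mem_inter, mem_Icc, mem_Ioc]
      constructor
      · rintro (h | h) <;> exact h.1
      · intro hx
        have := mem_Icc.1 (hPs hx)
        by_cases hxN : x ≤ N
        · exact Or.inl ⟨hx, by omega⟩
        · exact Or.inr ⟨hx, by omega⟩
    have hdis : Disjoint (P ∩ Icc 1 N) (P ∩ Ioc N (N + 3)) := by
      rw [disjoint_left]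
      intro x
      simp only [mem_inter, mem_Icc, mem_Ioc]
      omega
    have hcard := card_union_of_disjoint hdis
    rw [hsplit] at hcard
    refine mem_image.2 ⟨(P ∩ Icc 1 N, P ∩ Ioc N (N + 3)), ?_, hsplit⟩
    rw [hS, mem_union, mem_product, mem_product]
    by_cases hk : (P ∩ Icc 1 N).card = k
    · left
      refine ⟨mem_powersetCard.2 ⟨inter_subset_right, hk⟩, ?_⟩
      have h1 : (P ∩ Ioc N (N + 3)).card ≤ 1 := by omega
      rcases Nat.le_one_iff_eq_zero_or_eq_one.1 h1 with h1 | h1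
      · simp [card_eq_zero.1 h1]
      · obtain ⟨y, hy⟩ := card_eq_one.1 h1
        have hy' : y ∈ P ∩ Ioc N (N + 3) := by rw [hy]; simp
        have := mem_Ioc.1 (mem_inter.1 hy').2
        simp only [hy, mem_insert, mem_singleton, singleton_inj]
        right; omega
    · right
      refine ⟨mem_biUnion.2 ⟨_, mem_range.2 ?_, mem_powersetCard.2 ⟨inter_subset_right, rfl⟩⟩,
        mem_powerset.2 inter_subset_right⟩
      change (P ∩ Icc 1 N).card < k
      omega
  refine (card_le_card hsub).trans (card_image_le.trans ((card_union_le _ _).trans ?_))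
  rw [card_product, card_product, card_powersetCard, card_powerset, Nat.card_Ioc, Nat.card_Icc]
  have e1 : ({∅, {N + 1}, {N + 2}, {N + 3}} : Finset (Finset ℕ)).card ≤ 4 := card_le_four
  have e2 : ((range k).biUnion fun i => powersetCard i (Icc 1 N)).card ≤
      ∑ i ∈ range k, N.choose i := by
    refine card_biUnion_le.trans (le_of_eq (sum_congr rfl fun i _ => ?_))
    rw [card_powersetCard, Nat.card_Icc]; simp
  have e3 : 2 ^ (N + 3 - N) = 8 := by rw [Nat.add_sub_cancel_left]; norm_num
  rw [e3, Nat.add_sub_cancel]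
  have e4 := Nat.mul_le_mul_left (N.choose k) e1
  omega

/-! ### The structure of up-sets with few missing sets -/

lemma ground_eq (n : ℕ) : ground n = Ioc 0 n := by
  ext x; simp only [ground, mem_Icc, mem_Ioc]; omega

/-- Two disjoint members of `U` inside `[k] ∪ A ∪ {n - 2, n - 1, n}` extend to an `s`-matching,
because `(k, n - 3] \ A` has exactly `(k + 1) * (s - 2)` elements and is perfectly matched. -/
lemma two_sets {U : Finset (Finset ℕ)} {n k s T : ℕ} (hn : n = (k + 1) * s + 1)
    (hs : T + 3 * k + 10 ≤ s) (hU : IsUp n U)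
    (h1 : ((ground n).powerset \ U).card <
      5 * ((k + 1) * (s - (T + 3 * k + 10))).choose k)
    (h2 : ((ground n).powerset \ U).card < T * (s - (T + 3 * k + 10)).choose k)
    (hν : ¬ HasMatching U s) {A X Y : Finset ℕ} (hA : A ⊆ Ioc k (n - 3)) (hAc : A.card = k)
    (hX : X ∈ U) (hY : Y ∈ U) (hXY : Disjoint X Y)
    (hXs : X ⊆ Ioc 0 k ∪ A ∪ Ioc (n - 3) n) (hYs : Y ⊆ Ioc 0 k ∪ A ∪ Ioc (n - 3) n) : False := by
  have hdis : Disjoint (Ioc 0 k ∪ A ∪ Ioc (n - 3) n) (Ioc k (n - 3) \ A) := by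
    rw [disjoint_left]
    intro x
    simp only [mem_union, mem_Ioc, mem_sdiff]
    rintro ((h | h) | h) ⟨h3, h4⟩
    · omega
    · exact h4 h
    · omega
  obtain ⟨w, rfl⟩ : ∃ w, s = w + 2 := ⟨s - 2, by omega⟩
  have e : (k + 1) * (w + 2) = (k + 1) * w + 2 * k + 2 := by ring
  have hM : MatchIn U (Ioc k (n - 3) \ A) w := by
    refine matchIn_of_card hn (le_refl 3) (by omega) hs hU h1 h2 w 0 _ ?_ ?_ (by omega) (by omega)
    · intro x hx
      have := mem_Ioc.1 (mem_sdiff.1 hx).1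
      rw [mem_Ioc]; omega
    · rw [card_sdiff_of_subset hA, hAc, Nat.card_Ioc]
      omega
  have hM1 := hM.insert hU hY (disjoint_of_subset_left hYs hdis)
  have hM2 := hM1.insert hU hX
    (disjoint_union_right.2 ⟨hXY, disjoint_of_subset_left hXs hdis⟩)
  exact hν hM2.hasMatching

/-- A member of `U` outside `Q` and one outside `W` would force either an `s`-matching or five missing
sets `A ∪ B`, with `B ⊆ {n - 2, n - 1, n}`, for each `k`-subset `A` of `(k, n - 3]`. -/
lemma subset_or_subset {U : Finset (Finset ℕ)} {n k s T : ℕ} (hn : n = (k + 1) * s + 1)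
    (hs : T + 3 * k + 10 ≤ s) (hU : IsUp n U)
    (h1 : ((ground n).powerset \ U).card <
      5 * ((k + 1) * (s - (T + 3 * k + 10))).choose k)
    (h2 : ((ground n).powerset \ U).card < T * (s - (T + 3 * k + 10)).choose k)
    (hν : ¬ HasMatching U s) : U ⊆ Qfam (k + 1) s 1 ∨ U ⊆ Wfam (k + 1) s 1 := by
  by_contra hcon
  rw [not_or, not_subset, not_subset] at hcon
  obtain ⟨⟨P, hPU, hPQ⟩, ⟨P', hPU', hPW⟩⟩ := hcon
  have hks : (k + 1) * s = k * s + s := by ring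
  have hg : ∀ P ∈ U, P ⊆ Ioc 0 n := fun P hP => by
    have := mem_powerset.1 (hU.sub hP)
    rwa [ground_eq] at this
  have hsplit : ∀ q, ∀ P ∈ U, P = P ∩ Ioc 0 q ∪ P ∩ Ioc q n := by
    intro q P hP
    ext x
    simp only [mem_union, mem_inter, mem_Ioc]
    constructor
    · intro hx
      have := mem_Ioc.1 (hg P hP hx)
      by_cases hxq : x ≤ q
      · exact Or.inl ⟨hx, by omega⟩
      · exact Or.inr ⟨hx, by omega⟩
    · rintro (h | h) <;> exact h.1
  have hup : ∀ A ∈ U, ∀ B : Finset ℕ, B ⊆ Ioc 0 n → Dom A B → B ∈ U := fun A hA B hB hd =>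
    hU.up A hA B (by rwa [ground_eq]) hd
  have hWn : (k + 1) * s - 1 = n - 2 := by omega
  have hQn : (k + 1) * s - 1 - 1 = n - 3 := by omega
  -- `P'` has at most `k` elements outside the last two points, so it lies below this set
  have hVW : Ioc 0 k ∪ {n - 1, n} ∈ U := by
    have hc : (P' ∩ Ioc 0 (n - 2)).card ≤ k := by
      by_contra h'
      apply hPW
      simp only [Wfam, mem_filter]
      rw [← hn, hWn, ground_eq (n - 2)]
      exact ⟨hU.sub hPU', by omega⟩
    refine hup P' hPU' _ ?_ ?_
    · intro x
      simp only [mem_union, mem_Ioc, mem_insert, mem_singleton]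
      omega
    · rw [hsplit (n - 2) P' hPU']
      refine Dom.union (Dom.initial (by simp) hc) (Dom.of_subset ?_) ?_
      · intro x
        simp only [mem_inter, mem_Ioc, mem_insert, mem_singleton]
        omega
      · rw [disjoint_left]
        intro x
        simp only [mem_Ioc, mem_insert, mem_singleton]
        omega
  have hone : ∀ A ⊆ Ioc k (n - 3), A.card = k → A ∪ {n - 2} ∉ U := by
    intro A hA hAc hmem
    refine two_sets hn hs hU h1 h2 hν hA hAc hVW hmem ?_ ?_ ?_
    · rw [disjoint_left]
      intro x
      simp only [mem_union, mem_Ioc, mem_insert, mem_singleton]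
      rintro h (h3 | h3)
      · have := mem_Ioc.1 (hA h3); omega
      · omega
    · intro x
      simp only [mem_union, mem_Ioc, mem_insert, mem_singleton]
      omega
    · intro x
      simp only [mem_union, mem_Ioc, mem_singleton]
      rintro (h | h)
      · exact Or.inl (Or.inr h)
      · right; omega
  have hPlt : 2 * (P ∩ Ioc 0 (n - 3)).card + (P ∩ Ioc (n - 3) n).card < 2 * (k + 1) := by
    by_contra h'
    apply hPQ
    simp only [Qfam, mem_filter]
    rw [← hn, hQn, ground_eq (n - 3)]
    have hdis : Disjoint (P ∩ Ioc 0 (n - 3)) (P ∩ Ioc (n - 3) n) := by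
      rw [disjoint_left]
      intro x
      simp only [mem_inter, mem_Ioc]
      omega
    have hcard := card_union_of_disjoint hdis
    rw [← hsplit (n - 3) P hPU] at hcard
    exact ⟨hU.sub hPU, by omega⟩
  rcases le_or_gt (P ∩ Ioc (n - 3) n).card 1 with hb | hb
  · -- with at most one tail point and at most `k` other points, `P` lies below this set
    have hVQ : Ioc 0 k ∪ {n - 2} ∈ U := by
      refine hup P hPU _ ?_ ?_
      · intro x
        simp only [mem_union, mem_Ioc, mem_singleton]
        omega
      · rw [hsplit (n - 3) P hPU]
        refine Dom.union (Dom.initial (by simp) (by omega)) (Dom.of_le (by simpa using hb) ?_) ?_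
        · intro x hx y hy
          simp only [mem_inter, mem_Ioc, mem_singleton] at hx hy
          omega
        · rw [disjoint_left]
          intro x
          simp only [mem_Ioc, mem_singleton]
          omega
    have htwo : ∀ A ⊆ Ioc k (n - 3), A.card = k → A ∪ {n - 1, n} ∉ U := by
      intro A hA hAc hmem
      refine two_sets hn hs hU h1 h2 hν hA hAc hVQ hmem ?_ ?_ ?_
      · rw [disjoint_left]
        intro x
        simp only [mem_union, mem_Ioc, mem_insert, mem_singleton]
        rintro h (h3 | h3)
        · have := mem_Ioc.1 (hA h3); omega
        · omega
      · intro x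
        simp only [mem_union, mem_Ioc, mem_singleton]
        omega
      · intro x
        simp only [mem_union, mem_Ioc, mem_insert, mem_singleton]
        rintro (h | h)
        · exact Or.inl (Or.inr h)
        · right; omega
    -- `∅`, three singletons and the pair `{n - 1, n}`: five tail sets, none of which completes a generic
    -- `k`-set to a member of `U`
    set K : Finset (Finset ℕ) := insert {n - 1, n} (insert ∅ ((Ioc (n - 3) n).image singleton))
      with hK
    have hKc : K.card = 5 := by
      rw [hK, card_insert_of_notMem, card_insert_of_notMem,
        card_image_of_injective _ singleton_injective, Nat.card_Ioc]
      · omega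
      · simp
      · simp only [mem_insert, mem_image, not_or]
        refine ⟨by simp, ?_⟩
        rintro ⟨y, -, hy⟩
        have := congrArg Finset.card hy
        rw [card_singleton, card_pair (by omega)] at this
        omega
    have hKs : ∀ B ∈ K, B = {n - 1, n} ∨ (B.card ≤ 1 ∧ B ⊆ Ioc (n - 3) n) := by
      intro B hB
      rcases mem_insert.1 hB with rfl | hB
      · exact Or.inl rfl
      · right
        rcases mem_insert.1 hB with rfl | hB
        · simp
        · obtain ⟨y, hy, rfl⟩ := mem_image.1 hB
          simpa using hy
    have hcount := count_missing (U := U) (n := n) (k := k) (lo := k) (p := n - 3) (by omega) K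
      (by
        intro B hB
        rcases hKs B hB with rfl | ⟨-, h⟩
        · intro x
          simp only [mem_Ioc, mem_insert, mem_singleton]
          omega
        · exact h) (by
        intro A hA hAc B hB hmem
        rcases hKs B hB with rfl | ⟨hBc, hBs⟩
        · exact htwo A hA hAc hmem
        · refine hone A hA hAc (hup _ hmem _ ?_ ?_)
          · intro x
            simp only [mem_union, mem_Ioc, mem_singleton]
            rintro (h | h)
            · have := mem_Ioc.1 (hA h); omega
            · omega
          · refine Dom.union (Dom.of_subset subset_rfl) (Dom.of_le (by simpa using hBc) ?_) ?_
            · intro x hx y hy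
              have := mem_Ioc.1 (hBs hx)
              rw [mem_singleton] at hy
              omega
            · rw [disjoint_left]
              intro x hx
              have := mem_Ioc.1 (hA hx)
              rw [mem_singleton]
              omega)
    rw [hKc] at hcount
    have hle : (k + 1) * (s - (T + 3 * k + 10)) ≤ n - 3 - k := by
      obtain ⟨w, rfl⟩ := Nat.exists_eq_add_of_le hs
      rw [Nat.add_sub_cancel_left]
      have e : (k + 1) * (T + 3 * k + 10 + w) =
        (k + 1) * w + k * (T + 3 * k) + T + 13 * k + 10 := by ring
      omega
    have := Nat.mul_le_mul_left 5 (Nat.choose_le_choose k hle)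
    omega
  · -- with two or three tail points, `P` has at most `k - 1` other points
    have hV : Ioc 0 (k - 1) ∪ Ioc (n - 3) n ∈ U := by
      refine hup P hPU _ ?_ ?_
      · intro x
        simp only [mem_union, mem_Ioc]
        omega
      · rw [hsplit (n - 3) P hPU]
        refine Dom.union (Dom.initial (by simp) (by omega)) (Dom.of_subset inter_subset_right) ?_
        rw [disjoint_left]
        intro x
        simp only [mem_Ioc]
        omega
    obtain ⟨w, rfl⟩ : ∃ w, s = w + 1 := ⟨s - 1, by omega⟩
    have e : (k + 1) * (w + 1) = (k + 1) * w + k + 1 := by ring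
    have hM : MatchIn U (Ioc (k - 1) (n - 3)) w := by
      refine matchIn_of_card hn (le_refl 3) (by omega) hs hU h1 h2 w 0 _ ?_ ?_ (by omega)
        (by omega)
      · intro x
        simp only [mem_Ioc]
        omega
      · rw [Nat.card_Ioc]
        omega
    refine hν (hM.insert hU hV ?_).hasMatching
    rw [disjoint_left]
    intro x
    simp only [mem_union, mem_Ioc]
    omega

/-- The set `(3 * k, n - 4]` is perfectly matched by `s - 3` members of `U`. If `U` had no
`(s - 1)`-matching, then for each `B` inside the last four points, with complement `B'` there, one
of `(k, 2 * k] ∪ B` and `(k, 2 * k] ∪ B'` would be missing from `U`. So at least 8 of the 16 sets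
`B` would complete no `k`-subset of `(2 * k, n - 4]` to a member of `U`. -/
lemma hasMatching_pred {U : Finset (Finset ℕ)} {n k s T : ℕ} (hn : n = (k + 1) * s + 1)
    (hs : T + 3 * k + 10 ≤ s) (hU : IsUp n U)
    (h1 : ((ground n).powerset \ U).card <
      6 * ((k + 1) * (s - (T + 3 * k + 10))).choose k)
    (h2 : ((ground n).powerset \ U).card < T * (s - (T + 3 * k + 10)).choose k) :
    HasMatching U (s - 1) := by
  by_contra hν
  have hks : (k + 1) * s = k * s + s := by ring
  have hks2 : k * 10 ≤ k * s := Nat.mul_le_mul_left k (by omega)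
  obtain ⟨w, hw⟩ : ∃ w, s = w + 3 := ⟨s - 3, by omega⟩
  have e : (k + 1) * s = (k + 1) * w + 3 * k + 3 := by rw [hw]; ring
  have hM : MatchIn U (Ioc (3 * k) (n - 4)) w := by
    refine matchIn_of_card hn (by omega) (le_refl 4) hs hU h1 h2 w 0 _ ?_ ?_ (by omega)
      (by omega)
    · intro x
      simp only [mem_Ioc]
      omega
    · rw [Nat.card_Ioc]
      omega
  set Tl : Finset ℕ := Ioc (n - 4) n with hTl
  have hTlc : Tl.card = 4 := by rw [hTl, Nat.card_Ioc]; omega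
  have htail : ∀ B ⊆ Tl, ∀ x ∈ B, n - 4 < x ∧ x ≤ n := fun B hB x hx => mem_Ioc.1 (hB hx)
  -- the first two blocks cannot be completed by complementary subsets of the tail
  have hpair : ∀ B ⊆ Tl, Ioc 0 k ∪ B ∈ U → Ioc k (2 * k) ∪ (Tl \ B) ∈ U → False := by
    intro B hB hX hY
    have hd1 : Disjoint (Ioc k (2 * k) ∪ (Tl \ B)) (Ioc (3 * k) (n - 4)) := by
      rw [disjoint_left]
      intro x hx
      rw [mem_Ioc]
      rcases mem_union.1 hx with h | h
      · have := mem_Ioc.1 h; omega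
      · have := htail _ sdiff_subset x h; omega
    have hd2 : Disjoint (Ioc 0 k ∪ B) (Ioc k (2 * k) ∪ (Tl \ B) ∪ Ioc (3 * k) (n - 4)) := by
      rw [disjoint_left]
      intro x hx
      simp only [mem_union, mem_Ioc, mem_sdiff, not_or]
      rcases mem_union.1 hx with h | h
      · have := mem_Ioc.1 h
        refine ⟨⟨by omega, fun h3 => ?_⟩, by omega⟩
        have := mem_Ioc.1 h3.1
        omega
      · have := htail _ hB x h
        exact ⟨⟨by omega, fun h3 => h3.2 h⟩, by omega⟩
    have hM2 := ((hM.insert hU hY hd1).insert hU hX hd2).hasMatching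
    exact hν (by rwa [show s - 1 = w + 1 + 1 by omega])
  set K : Finset (Finset ℕ) := Tl.powerset.filter (fun B => Ioc k (2 * k) ∪ B ∉ U) with hK
  have hlow : ∀ B ⊆ Tl, Ioc k (2 * k) ∪ B ∈ U → Ioc 0 k ∪ B ∈ U := by
    intro B hB hmem
    refine hU.up _ hmem _ ?_ ?_
    · rw [ground_eq]
      intro x hx
      rw [mem_Ioc]
      rcases mem_union.1 hx with h | h
      · have := mem_Ioc.1 h; omega
      · have := htail _ hB x h; omega
    · refine Dom.union (Dom.of_le (by simp only [Nat.card_Ioc]; omega) ?_)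
        (Dom.of_subset subset_rfl) ?_
      · intro x hx y hy
        have := mem_Ioc.1 hx
        have := mem_Ioc.1 hy
        omega
      · rw [disjoint_left]
        intro x hx hxB
        have := mem_Ioc.1 hx
        have := htail _ hB x hxB
        omega
  have hKc : 8 ≤ K.card := by
    have hle : (Tl.powerset.filter (fun B => ¬ Ioc k (2 * k) ∪ B ∉ U)).card ≤ K.card := by
      refine card_le_card_of_injOn (fun B => Tl \ B) ?_ ?_
      · intro B hB
        obtain ⟨hB1, hB2⟩ := mem_filter.1 (mem_coe.1 hB)
        have hB1 := mem_powerset.1 hB1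
        refine mem_coe.2 (mem_filter.2 ⟨mem_powerset.2 sdiff_subset, fun h => ?_⟩)
        exact hpair B hB1 (hlow B hB1 (not_not.1 hB2)) h
      · intro B hB B' hB' heq
        have hB1 := mem_powerset.1 (mem_filter.1 (mem_coe.1 hB)).1
        have hB1' := mem_powerset.1 (mem_filter.1 (mem_coe.1 hB')).1
        simp only at heq
        rw [← Finset.sdiff_sdiff_eq_self hB1, heq, Finset.sdiff_sdiff_eq_self hB1']
    have hsum := card_filter_add_card_filter_not (s := Tl.powerset)
      (fun B => Ioc k (2 * k) ∪ B ∉ U)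
    rw [← hK, card_powerset, hTlc] at hsum
    omega
  have hcount := count_missing (U := U) (n := n) (k := k) (lo := 2 * k) (p := n - 4) (by omega) K
    (fun B hB => mem_powerset.1 (mem_filter.1 hB).1) (by
      intro A hA hAc B hB hmem
      obtain ⟨hB1, hB2⟩ := mem_filter.1 hB
      have hB1 := mem_powerset.1 hB1
      refine hB2 (hU.up _ hmem _ ?_ ?_)
      · rw [ground_eq]
        intro x hx
        rw [mem_Ioc]
        rcases mem_union.1 hx with h | h
        · have := mem_Ioc.1 h; omega
        · have := htail _ hB1 x h; omega
      · refine Dom.union (Dom.of_le (by rw [Nat.card_Ioc]; omega) ?_)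
          (Dom.of_subset subset_rfl) ?_
        · intro x hx y hy
          have := mem_Ioc.1 (hA hx)
          have := mem_Ioc.1 hy
          omega
        · rw [disjoint_left]
          intro x hx hxB
          have := mem_Ioc.1 hx
          have := htail _ hB1 x hxB
          omega)
  have hle : (k + 1) * (s - (T + 3 * k + 10)) ≤ n - 4 - 2 * k := by
    obtain ⟨v, rfl⟩ := Nat.exists_eq_add_of_le hs
    rw [Nat.add_sub_cancel_left]
    have e : (k + 1) * (T + 3 * k + 10 + v) =
      (k + 1) * v + k * (T + 3 * k) + T + 13 * k + 10 := by ring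
    omega
  have := Nat.mul_le_mul (show 6 ≤ K.card by omega) (Nat.choose_le_choose k hle)
  omega

/-! ### Uniqueness of the shifted extremal families -/

theorem stmt_2 (m : ℕ) (hm : 1 ≤ m) :
    ∃ s0 : ℕ, ∀ s : ℕ, s0 ≤ s →
      ∀ F : Finset (Finset ℕ), F ⊆ (ground (m * s + 1)).powerset →
        IsShifted F → ¬ HasMatching F s → F.card = (Qfam m s 1).card →
          F = Qfam m s 1 ∨ F = Wfam m s 1 := by
  obtain ⟨k, rfl⟩ : ∃ k, m = k + 1 := ⟨m - 1, by omega⟩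
  -- `T * C(s - C, k)` exceeds the number of sets missing from `Q`, by a factor of about `6 / 4`
  set T := 6 * (k + 1) ^ k with hT
  set C := T + 3 * k + 10 with hC
  obtain ⟨s₁, hs₁⟩ := Filter.eventually_atTop.1 (numeric k C)
  refine ⟨s₁ + C + k + 10, fun s hs F hFsub hF hν hFc => ?_⟩
  have hnum := hs₁ s (by omega)
  set n := (k + 1) * s + 1 with hn
  have hks : (k + 1) * s = k * s + s := by ring
  have hQmiss := Qfam_compl_card_le k s (by omega)
  rw [← hn] at hQmiss
  set E := 4 * ((k + 1) * s - 2).choose k + 8 * ∑ i ∈ range k, ((k + 1) * s - 2).choose i with hE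
  have hpos : 1 ≤ (k + 1) ^ k * (s - C).choose k :=
    Nat.mul_pos (by positivity) (Nat.choose_pos (by omega))
  have hchoose := pow_mul_choose_le (k + 1) (s - C) k (by omega)
  have hTc : T * (s - C).choose k = 6 * ((k + 1) ^ k * (s - C).choose k) := by rw [hT]; ring
  have hQsub : Qfam (k + 1) s 1 ⊆ (ground n).powerset := filter_subset _ _
  have hQcard := card_sdiff_add_card_eq_card hQsub
  set U := upc n F with hUdef
  have hU : IsUp n U := isUp_upc n F
  have hUcard := card_sdiff_add_card_eq_card hU.sub
  have hsub : F.erase ∅ ⊆ U := by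
    intro A hA
    obtain ⟨hA1, hA2⟩ := mem_erase.1 hA
    exact mem_upc.2 ⟨mem_powerset.1 (hFsub hA2), A, hA2, nonempty_iff_ne_empty.2 hA1,
      Dom.of_subset subset_rfl⟩
  have hsubc := card_le_card hsub
  by_cases hempty : ∅ ∈ F
  · exfalso
    -- `∅` enlarges every matching of nonempty sets
    rw [card_erase_of_mem hempty] at hsubc
    have hFpos : 0 < F.card := card_pos.2 ⟨_, hempty⟩
    have hmatch := hasMatching_pred (U := U) (T := T) hn (by omega) hU (by rw [← hC]; omega)
      (by rw [← hC]; omega)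
    obtain ⟨M, hM, hMc, hMd⟩ := hasMatching_of_upc hF hmatch
    refine hν ⟨insert ∅ M, ?_, ?_, ?_⟩
    · exact insert_subset hempty (hM.trans (erase_subset _ _))
    · rw [card_insert_of_notMem (fun h => by simpa using hM h)]
      omega
    · rw [coe_insert]
      exact hMd.insert (fun B _ _ => disjoint_empty_left _)
  · rw [erase_eq_of_notMem hempty] at hsub hsubc
    have hνU : ¬ HasMatching U s := by
      intro h
      have := hasMatching_of_upc hF h
      rw [erase_eq_of_notMem hempty] at this
      exact hν this
    rcases subset_or_subset (U := U) (T := T) hn (by omega) hU (by rw [← hC]; omega)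
      (by rw [← hC]; omega) hνU with h | h
    · exact Or.inl (eq_of_subset_of_card_le (hsub.trans h) hFc.ge)
    · refine Or.inr (eq_of_subset_of_card_le (hsub.trans h) ?_)
      rw [hFc]
      exact Wfam_card_le _ _ (by omega)
end

section
/- Let m ≥ 2 and s ≥ 2 be integers, and set c = 1, n = ms + 1, ℓ = s − 1. Then |Q(m,s,s−1)| = |W(m,s,s−1)|, i.e., the families Q(m,s,s−1) and W(m,s,s−1) of subsets of [ms+1] have the same cardinality. -/
/-!
Write `m * s = N + 2`, so that `[m * s + 1]` is `[N]` together with three outer points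
`N + 1, N + 2, N + 3`. With `x = |P ∩ [N]|`, membership in the first family reads
`2 * x + t ≥ 2 * m`, where `t` is the number of outer points in `P`, and membership in the second
reads `x + [N + 1 ∈ P] ≥ m`. Thus the families differ only at `x = m - 1`, where a set
lies in the first but not the second exactly when its outer points are `{N + 2, N + 3}`, and in the
second but not the first exactly when its only outer point is `N + 1`. Complementing `P` inside the
outer triple (symmetric difference) exchanges these two configurations.
-/

open Finset

lemma card_inter_ground_succ (P : Finset ℕ) (k : ℕ) :
    (P ∩ ground (k + 1)).card = (P ∩ ground k).card + if k + 1 ∈ P then 1 else 0 := by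
  have hg : ground (k + 1) = insert (k + 1) (ground k) := by
    ext x; simp only [ground, mem_insert, mem_Icc]; omega
  rw [hg]
  split_ifs with h
  · rw [inter_insert_of_mem h, card_insert_of_notMem]
    simp [ground]
  · rw [inter_insert_of_notMem h, add_zero]

lemma card_of_subset_ground {N : ℕ} {P : Finset ℕ} (hP : P ⊆ ground (N + 3)) :
    P.card = (P ∩ ground N).card + (if N + 1 ∈ P then 1 else 0) + (if N + 2 ∈ P then 1 else 0)
      + if N + 3 ∈ P then 1 else 0 := by
  rw [← card_inter_ground_succ, ← card_inter_ground_succ, ← card_inter_ground_succ,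
    inter_eq_left.mpr hP]

/-- Complementation of `P` inside the outer triple `{N + 1, N + 2, N + 3}`, leaving the rest of `P`
unchanged. -/
def flipOuter (N : ℕ) (P : Finset ℕ) : Finset ℕ := symmDiff P {N + 1, N + 2, N + 3}

lemma flipOuter_flipOuter (N : ℕ) (P : Finset ℕ) : flipOuter N (flipOuter N P) = P :=
  symmDiff_symmDiff_cancel_right _ _

lemma flipOuter_inter_ground (N : ℕ) (P : Finset ℕ) :
    flipOuter N P ∩ ground N = P ∩ ground N := by
  ext x
  simp only [flipOuter, ground, mem_inter, mem_symmDiff, mem_insert, mem_singleton, mem_Icc]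
  grind

lemma flipOuter_subset_ground {N : ℕ} {P : Finset ℕ} (hP : P ⊆ ground (N + 3)) :
    flipOuter N P ⊆ ground (N + 3) := by
  intro x hx
  have := @hP x
  simp only [flipOuter, ground, mem_symmDiff, mem_insert, mem_singleton, mem_Icc] at *
  grind

lemma mem_Qfam_sdiff_Wfam {m s N : ℕ} (hN : m * s = N + 2) (P : Finset ℕ) :
    P ∈ Qfam m s 1 \ Wfam m s 1 ↔ P ⊆ ground (N + 3) ∧ (P ∩ ground N).card + 1 = m ∧
      N + 1 ∉ P ∧ N + 2 ∈ P ∧ N + 3 ∈ P := by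
  simp only [Qfam, Wfam, mem_sdiff, mem_filter, mem_powerset, hN,
    show N + 2 + 1 = N + 3 from rfl,
    show N + 2 - 1 = N + 1 from rfl, card_inter_ground_succ]
  by_cases hP : P ⊆ ground (N + 3)
  · rw [card_of_subset_ground hP]
    simp only [hP, true_and]
    split_ifs <;> simp_all <;> omega
  · simp [hP]

lemma mem_Wfam_sdiff_Qfam {m s N : ℕ} (hN : m * s = N + 2) (P : Finset ℕ) :
    P ∈ Wfam m s 1 \ Qfam m s 1 ↔ P ⊆ ground (N + 3) ∧ (P ∩ ground N).card + 1 = m ∧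
      N + 1 ∈ P ∧ N + 2 ∉ P ∧ N + 3 ∉ P := by
  simp only [Qfam, Wfam, mem_sdiff, mem_filter, mem_powerset, hN,
    show N + 2 + 1 = N + 3 from rfl,
    show N + 2 - 1 = N + 1 from rfl, card_inter_ground_succ]
  by_cases hP : P ⊆ ground (N + 3)
  · rw [card_of_subset_ground hP]
    simp only [hP, true_and]
    split_ifs <;> simp_all <;> omega
  · simp [hP]

theorem stmt_5 (m s : ℕ) (hm : 2 ≤ m) (hs : 2 ≤ s) :
    (Qfam m s 1).card = (Wfam m s 1).card := by
  obtain ⟨N, hN⟩ : ∃ N, m * s = N + 2 := ⟨m * s - 2, by have := Nat.mul_le_mul hm hs; omega⟩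
  have key : (Qfam m s 1 \ Wfam m s 1).card = (Wfam m s 1 \ Qfam m s 1).card := by
    refine card_nbij' (flipOuter N) (flipOuter N) ?_ ?_
      (fun P _ => flipOuter_flipOuter N P) (fun P _ => flipOuter_flipOuter N P)
    · intro P hP
      rw [mem_coe, mem_Qfam_sdiff_Wfam hN] at hP
      rw [mem_coe, mem_Wfam_sdiff_Qfam hN, flipOuter_inter_ground]
      refine ⟨flipOuter_subset_ground hP.1, hP.2.1, ?_⟩
      simp [flipOuter, mem_symmDiff, hP.2.2]
    · intro P hP
      rw [mem_coe, mem_Wfam_sdiff_Qfam hN] at hP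
      rw [mem_coe, mem_Qfam_sdiff_Wfam hN, flipOuter_inter_ground]
      refine ⟨flipOuter_subset_ground hP.1, hP.2.1, ?_⟩
      simp [flipOuter, mem_symmDiff, hP.2.2]
  have h₁ := card_sdiff_add_card_inter (Qfam m s 1) (Wfam m s 1)
  have h₂ := card_sdiff_add_card_inter (Wfam m s 1) (Qfam m s 1)
  rw [inter_comm] at h₂
  omega
end

section
/- For all integers m ≥ 2 and s ≥ 2, the following binomial identity holds: Σ_{i=0}^{m} C(sm+1, i) − C(sm−2, m) + C(sm−2, m−2) = 4 · Σ_{i=0}^{m−1} C(sm−1, i), where C(a,b) denotes the binomial coefficient 'a choose b'. -/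
/-!
The identity holds with `s * m - 2` replaced by an arbitrary `N`. Writing `c i = N.choose i`, Pascal's
rule gives `(N + 3).choose i = c i + 3 c (i - 1) + 3 c (i - 2) + c (i - 3)`. Summing over `i ≤ m`, the
two correction terms `- c m + c (m - 2)` turn the partial sums of `c` into four copies of those up to
`m - 1` plus four copies of those up to `m - 2`, which is four times the partial sum of
`(N + 1).choose i` over `i ≤ m - 1`. The lemma `sum_choose_add_three` proves this by induction on `m`.
-/

open Finset

/-- The identity for an arbitrary `N`, with `m = k + 2`. -/
theorem sum_choose_add_three (N k : ℕ) :
    (∑ i ∈ Finset.range (k + 3), ((N + 3).choose i : ℤ))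
      - (N.choose (k + 2) : ℤ) + (N.choose k : ℤ)
    = 4 * ∑ i ∈ Finset.range (k + 2), ((N + 1).choose i : ℤ) := by
  induction k with
  | zero =>
    simp only [Finset.sum_range_succ, Finset.sum_range_zero, Nat.choose_succ_succ',
      Nat.choose_zero_right, Nat.choose_one_right, zero_add]
    push_cast
    ring
  | succ k ih =>
    rw [Finset.sum_range_succ, Finset.sum_range_succ (fun i => ((N + 1).choose i : ℤ))]
    have h1 : (N + 3).choose (k + 3) = N.choose (k + 3) + 3 * N.choose (k + 2)
        + 3 * N.choose (k + 1) + N.choose k := by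
      simp only [Nat.choose_succ_succ']
      ring
    have h2 : (N + 1).choose (k + 2) = N.choose (k + 1) + N.choose (k + 2) :=
      Nat.choose_succ_succ' N (k + 1)
    rw [h1, h2]
    push_cast
    linarith

theorem stmt_6 (m s : ℕ) (hm : 2 ≤ m) (hs : 2 ≤ s) :
    (∑ i ∈ Finset.range (m + 1), ((s * m + 1).choose i : ℤ))
      - ((s * m - 2).choose m : ℤ) + ((s * m - 2).choose (m - 2) : ℤ)
    = 4 * ∑ i ∈ Finset.range m, ((s * m - 1).choose i : ℤ) := by
  obtain ⟨k, rfl⟩ := Nat.exists_eq_add_of_le' hm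
  -- The bound `s * m ≥ 2` makes both truncated subtractions genuine.
  obtain ⟨N, hN⟩ : ∃ N, s * (k + 2) = N + 2 :=
    Nat.exists_eq_add_of_le' (by nlinarith)
  rw [hN]
  exact sum_choose_add_three N k
end

section
/- Let m ≥ 2 and s ≥ 2 be integers, c = 1, n = ms + 1. Then the number of subsets of [n] NOT belonging to Q(m,s,s−1) equals Σ_{i=0}^{m} C(sm+1, i) − C(sm−2, m) + C(sm−2, m−2). Equivalently, the complement 2^{[n]} ∖ Q(m,s,s−1) consists exactly of: all subsets of [n] of size less than m; all subsets of size m that intersect {sm−1, sm, sm+1}; and all subsets of size m+1 that contain {sm−1, sm, sm+1}. -/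
/-!
Write `A = [ms - 2]` and `T = {ms - 1, ms, ms + 1}`, so that `[n]` is the disjoint union of `A` and
`T`. With `t = |P ∩ T| ≤ 3` the inequality `|P| + |P ∩ A| < 2m` reads `2|P| < 2m + t`, and comparing
parities leaves three cases: `|P| < m`; `|P| = m` and `t ≥ 1`; `|P| = m + 1` and `t = 3`
(`lt_iff_cases`). Hence the complement of `Q` arises from the family of all sets of size at most `m`
by deleting the `m`-subsets of `A` and adding the sets `T ∪ B` with `B` an `(m - 2)`-subset of `A`
(`card_lowFam`), which gives the count.
-/

open Finset

theorem lt_iff_cases {A T P : Finset ℕ} (hd : Disjoint A T) (hT : T.card = 3) (hP : P ⊆ A ∪ T)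
    (m : ℕ) :
    P.card + (P ∩ A).card < 2 * m ↔
      P.card < m ∨ (P.card = m ∧ (P ∩ T).Nonempty) ∨ (P.card = m + 1 ∧ T ⊆ P) := by
  have h1 : P.card = (P ∩ A).card + (P ∩ T).card := by
    rw [← card_union_of_disjoint (hd.mono inter_subset_right inter_subset_right),
      ← inter_union_distrib_left, inter_eq_left.2 hP]
  have h2 : (P ∩ T).card ≤ 3 := hT ▸ card_le_card inter_subset_right
  have h3 : (P ∩ T).Nonempty ↔ 1 ≤ (P ∩ T).card := by rw [← card_pos]; rfl
  have h4 : T ⊆ P ↔ (P ∩ T).card = 3 := by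
    rw [← inter_eq_right]
    exact ⟨fun h => by rw [h, hT], fun h => eq_of_subset_of_card_le inter_subset_right (by omega)⟩
  rw [h3, h4]
  omega

theorem card_filter_card_le (U : Finset ℕ) (m : ℕ) :
    (U.powerset.filter (fun P => P.card ≤ m)).card
      = ∑ i ∈ Finset.range (m + 1), U.card.choose i := by
  rw [card_eq_sum_card_fiberwise (f := card) (t := range (m + 1))]
  · refine sum_congr rfl fun i hi => ?_
    rw [← card_powersetCard]
    congr 1
    ext P
    simp only [mem_filter, mem_powerset, mem_powersetCard, mem_range] at hi ⊢
    constructor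
    · rintro ⟨⟨h, -⟩, h'⟩
      exact ⟨h, h'⟩
    · rintro ⟨h, h'⟩
      exact ⟨⟨h, by omega⟩, h'⟩
  · intro P hP
    simp only [coe_filter, Set.mem_ofPred_eq, coe_range, Set.mem_Iio] at hP ⊢
    omega

/-- The count of the sets violating the inequality defining `Q`, for an arbitrary ground set split
as `A ∪ T` with `|T| = 3`; both sides are arranged so that no cardinality is subtracted. -/
theorem card_lowFam {A T : Finset ℕ} (hd : Disjoint A T) (hT : T.card = 3) {m : ℕ} (hm : 2 ≤ m) :
    ((A ∪ T).powerset.filter (fun P => P.card + (P ∩ A).card < 2 * m)).card + A.card.choose m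
      = (∑ i ∈ Finset.range (m + 1), (A ∪ T).card.choose i) + A.card.choose (m - 2) := by
  have hcard : ∀ B ⊆ A, (T ∪ B).card = 3 + B.card := fun B hB => by
    rw [card_union_of_disjoint (hd.symm.mono_right hB), hT]
  have hinj : Set.InjOn (fun B => T ∪ B) (powersetCard (m - 2) A : Set (Finset ℕ)) := by
    intro B hB C hC h
    have hB' := hd.symm.mono_right (mem_powersetCard.1 (mem_coe.1 hB)).1
    have hC' := hd.symm.mono_right (mem_powersetCard.1 (mem_coe.1 hC)).1
    have h' : (T ∪ B) \ T = (T ∪ C) \ T := congrArg (· \ T) h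
    rwa [union_sdiff_cancel_left hB', union_sdiff_cancel_left hC'] at h'
  have hdis1 : Disjoint ((A ∪ T).powerset.filter (fun P => P.card + (P ∩ A).card < 2 * m))
      (powersetCard m A) := by
    rw [disjoint_left]
    intro P hP hP'
    rw [mem_powersetCard] at hP'
    have := (mem_filter.1 hP).2
    rw [inter_eq_left.2 hP'.1] at this
    omega
  have hdis2 : Disjoint ((A ∪ T).powerset.filter (fun P => P.card ≤ m))
      ((powersetCard (m - 2) A).image (fun B => T ∪ B)) := by
    rw [disjoint_left]
    intro P hP hP'
    obtain ⟨B, hB, rfl⟩ := mem_image.1 hP'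
    rw [mem_powersetCard] at hB
    have := (mem_filter.1 hP).2
    rw [hcard B hB.1] at this
    omega
  rw [← card_filter_card_le, ← card_powersetCard m A, ← card_powersetCard (m - 2) A,
    ← card_image_of_injOn hinj, ← card_union_of_disjoint hdis1, ← card_union_of_disjoint hdis2]
  congr 1
  ext P
  simp only [mem_union, mem_filter, mem_powerset, mem_powersetCard, mem_image]
  constructor
  · rintro (⟨hP, h⟩ | ⟨hP, h⟩)
    · rcases (lt_iff_cases hd hT hP m).1 h with h | ⟨h, -⟩ | ⟨h, hTP⟩
      · exact .inl ⟨hP, h.le⟩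
      · exact .inl ⟨hP, h.le⟩
      · refine .inr ⟨P \ T, ⟨?_, ?_⟩, union_sdiff_of_subset hTP⟩
        · exact sdiff_le_iff'.2 hP
        · rw [card_sdiff_of_subset hTP]
          omega
    · exact .inl ⟨hP.trans subset_union_left, h.le⟩
  · rintro (⟨hP, h⟩ | ⟨B, ⟨hB, h⟩, rfl⟩)
    · by_cases hA : P.card = m ∧ P ⊆ A
      · exact .inr ⟨hA.2, hA.1⟩
      · refine .inl ⟨hP, (lt_iff_cases hd hT hP m).2 ?_⟩
        rcases h.lt_or_eq with h | h
        · exact .inl h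
        · refine .inr (.inl ⟨h, ?_⟩)
          by_contra hne
          rw [not_nonempty_iff_eq_empty, ← disjoint_iff_inter_eq_empty] at hne
          exact hA ⟨h, Disjoint.left_le_of_le_sup_right hP hne⟩
    · have hU : T ∪ B ⊆ A ∪ T := union_subset subset_union_right (hB.trans subset_union_left)
      refine .inl ⟨hU, (lt_iff_cases hd hT hU m).2 (.inr (.inr ⟨?_, subset_union_left⟩))⟩
      rw [hcard B hB]
      omega


theorem stmt_7 (m s : ℕ) (hm : 2 ≤ m) (hs : 2 ≤ s) :
    ((((ground (m * s + 1)).powerset \ Qfam m s 1).card : ℤ)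
      = (∑ i ∈ Finset.range (m + 1), ((s * m + 1).choose i : ℤ))
        - ((s * m - 2).choose m : ℤ) + ((s * m - 2).choose (m - 2) : ℤ)) ∧
    (∀ P ⊆ ground (m * s + 1),
      (P ∉ Qfam m s 1 ↔
        P.card < m ∨
        (P.card = m ∧ (P ∩ ({s * m - 1, s * m, s * m + 1} : Finset ℕ)).Nonempty) ∨
        (P.card = m + 1 ∧ ({s * m - 1, s * m, s * m + 1} : Finset ℕ) ⊆ P))) := by
  rw [mul_comm s m]
  have hms : 4 ≤ m * s := Nat.mul_le_mul hm hs
  set T : Finset ℕ := {m * s - 1, m * s, m * s + 1} with hTdef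
  have hT : T.card = 3 := by
    rw [card_eq_three]
    exact ⟨_, _, _, by omega, by omega, by omega, hTdef⟩
  have hd : Disjoint (ground (m * s - 1 - 1)) T := by
    rw [disjoint_left]
    intro x hx hx'
    simp only [ground, hTdef, mem_Icc, mem_insert, mem_singleton] at hx hx'
    omega
  have hU : ground (m * s + 1) = ground (m * s - 1 - 1) ∪ T := by
    ext x
    simp only [ground, hTdef, mem_union, mem_Icc, mem_insert, mem_singleton]
    omega
  constructor
  · have key := card_lowFam hd hT hm
    have hF : (ground (m * s + 1)).powerset \ Qfam m s 1
        = (ground (m * s + 1)).powerset.filter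
          (fun P => P.card + (P ∩ ground (m * s - 1 - 1)).card < 2 * m) := by
      ext P
      simp only [Qfam, mem_sdiff, mem_filter, not_and, not_le]
      tauto
    rw [← hU, ← hF] at key
    have c1 : (ground (m * s + 1)).card = m * s + 1 := by simp [ground]
    have c2 : (ground (m * s - 1 - 1)).card = m * s - 2 := by simp [ground]; omega
    rw [c1, c2] at key
    zify at key
    linarith
  · intro P hP
    rw [← lt_iff_cases hd hT (hU ▸ hP) m]
    simp only [Qfam, mem_filter, mem_powerset, hP, true_and, not_le]
end

section
/- Let m ≥ 2, s, c be positive integers with c ≤ s, n = ms + c, ℓ = s − c ≥ 1, and let d ≥ 0 be an integer with d + mℓ ≤ n. Let F ⊆ 2^{[n]} be a shifted family whose deletion number satisfies d(F) > d. Then for every integer k with 0 ≤ k ≤ d/m and every set X ⊆ [d + mℓ] with |X| = d − km, the family F ∩ (([d+mℓ] ∖ X) choose m) contains ℓ + k pairwise disjoint sets. -/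
/-!
The proof is an induction on `k`.

For `k = 0`, the bound on the deletion number gives an `ℓ`-matching of `m`-sets of `F` avoiding
`X`. Its union `U` has `mℓ` elements, exactly as many as `[d + mℓ] \ X`. The order isomorphism
between the two sets does not increase any element, since `[d + mℓ] \ X` consists of the `mℓ`
smallest positive integers outside `X` (`exists_compression`). Applying it to each member of the
matching therefore only shifts that member, and the image is an `ℓ`-matching of `F` inside
`[d + mℓ] \ X` (`matching_compress`).

For the step from `k` to `k + 1`, let `|X| = d - (k + 1)m`. Enlarging `X` by any `m` further points
and applying the induction hypothesis produces some `m`-set `Y ∈ F` in `[d + mℓ] \ X`. The induction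
hypothesis for `X ∪ Y` then gives an `(ℓ + k)`-matching disjoint from `Y`, to which `Y` is added.
-/


open Finset

lemma canShiftTo_image (A : Finset ℕ) (f : ℕ → ℕ) (hmono : StrictMonoOn f A)
    (hle : ∀ a ∈ A, f a ≤ a) : CanShiftTo A (A.image f) := by
  have hcard : (A.image f).card = A.card := card_image_of_injOn hmono.injOn
  refine ⟨hcard, fun i => ?_⟩
  have hu : (fun i => f (A.orderEmbOfFin rfl i)) = (A.image f).orderEmbOfFin hcard := by
    apply Finset.orderEmbOfFin_unique
    · intro i
      exact mem_image_of_mem f (orderEmbOfFin_mem _ _ _)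
    · intro i j hij
      exact hmono (orderEmbOfFin_mem _ _ _) (orderEmbOfFin_mem _ _ _)
        ((A.orderEmbOfFin rfl).strictMono hij)
  rw [← hu]
  exact hle _ (orderEmbOfFin_mem _ _ _)

/-- A set `U` of positive integers avoiding `X` can be compressed, without increasing any element
and keeping the order, into the first `|U|` positive integers avoiding `X`. -/
lemma exists_compression (U X : Finset ℕ) (N : ℕ) (hX : X ⊆ ground N)
    (hcard : U.card + X.card ≤ N) (hU : ∀ u ∈ U, 0 < u ∧ u ∉ X) :
    ∃ f : ℕ → ℕ, StrictMonoOn f U ∧ (∀ u ∈ U, f u ≤ u) ∧ ∀ u ∈ U, f u ∈ ground N \ X := by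
  classical
  let p : ℕ → Prop := fun x => 0 < x ∧ x ∉ X
  have hinf : {x | p x}.Infinite := by
    have : {x | p x} = ((insert 0 X : Finset ℕ) : Set ℕ)ᶜ := by
      ext x
      simp [p, Nat.pos_iff_ne_zero]
    rw [this]
    exact (Finset.finite_toSet _).infinite_compl
  have hcount : U.card ≤ Nat.count p (N + 1) := by
    have h : (range (N + 1)).filter p = ground N \ X := by
      ext x
      simp only [mem_filter, mem_range, mem_sdiff, ground, mem_Icc, p]
      grind
    rw [Nat.count_eq_card_filter_range, h, card_sdiff_of_subset hX]
    simp only [ground, Nat.card_Icc]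
    omega
  -- The element of rank `i` in `U` goes to the element of rank `i` in the complement of `X`.
  refine ⟨fun u => Nat.nth p (U.filter (· < u)).card, ?_, ?_, ?_⟩
  · intro a ha b hb hab
    apply Nat.nth_strictMono hinf
    apply card_lt_card
    rw [ssubset_iff_of_subset]
    · exact ⟨a, by simpa using ⟨ha, hab⟩, by simp⟩
    · intro x hx
      simp only [mem_filter] at hx ⊢
      exact ⟨hx.1, hx.2.trans hab⟩
  · intro u hu
    have hpu : p u := hU u hu
    calc Nat.nth p (U.filter (· < u)).card ≤ Nat.nth p (Nat.count p u) := by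
          apply Nat.nth_monotone hinf
          rw [Nat.count_eq_card_filter_range]
          apply card_le_card
          intro x hx
          simp only [mem_filter, mem_range] at hx ⊢
          exact ⟨hx.2, hU x hx.1⟩
      _ = u := Nat.nth_count hpu
  · intro u hu
    have h1 : p (Nat.nth p (U.filter (· < u)).card) := Nat.nth_mem_of_infinite hinf _
    have h2 : (U.filter (· < u)).card < U.card := by
      apply card_lt_card
      rw [ssubset_iff_of_subset (filter_subset _ _)]
      exact ⟨u, hu, by simp⟩
    have h3 : Nat.nth p (U.filter (· < u)).card < N + 1 :=
      Nat.nth_lt_of_lt_count (h2.trans_le hcount)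
    simp only [mem_sdiff, ground, mem_Icc]
    exact ⟨⟨h1.1, by omega⟩, h1.2⟩

/-- In a shifted family, a matching of `r` sets of size `m` that avoids `X` can be pushed into the
initial segment `[N]`, still avoiding `X`, as soon as `[N] \ X` has room for `mr` elements. -/
lemma matching_compress (F : Finset (Finset ℕ)) (hshift : IsShifted F) (n N m r : ℕ) (hm : 0 < m)
    (X : Finset ℕ) (hX : X ⊆ ground N) (hN : m * r + X.card ≤ N)
    (h : HasMatching (F.filter (fun A => A.card = m ∧ A ⊆ ground n \ X)) r) :
    HasMatching (F.filter (fun A => A.card = m ∧ A ⊆ ground N \ X)) r := by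
  classical
  obtain ⟨M, hMF, hMr, hMd⟩ := h
  have hM : ∀ A ∈ M, A ∈ F ∧ A.card = m ∧ A ⊆ ground n \ X := fun A hA => by
    simpa using hMF hA
  have hUcard : (M.biUnion id).card = m * r := by
    rw [card_biUnion (fun A hA B hB hAB => hMd hA hB hAB),
      sum_const_nat (m := m) (f := fun A => (id A).card) (fun A hA => (hM A hA).2.1), hMr, mul_comm]
  obtain ⟨f, hmono, hle, hmem⟩ := exists_compression (M.biUnion id) X N hX (by omega) (by
    intro u hu
    obtain ⟨A, hA, huA⟩ := mem_biUnion.1 hu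
    have := (hM A hA).2.2 huA
    simp only [mem_sdiff, ground, mem_Icc] at this
    exact ⟨this.1.1, this.2⟩)
  have hsub : ∀ A ∈ M, A ⊆ M.biUnion id := fun A hA => subset_biUnion_of_mem id hA
  have hdisj : ∀ A ∈ M, ∀ B ∈ M, A ≠ B → Disjoint (A.image f) (B.image f) := by
    intro A hA B hB hAB
    rw [Finset.disjoint_left]
    intro x hxA hxB
    obtain ⟨a, ha, rfl⟩ := mem_image.1 hxA
    obtain ⟨b, hb, hab⟩ := mem_image.1 hxB
    obtain rfl := hmono.injOn (hsub B hB hb) (hsub A hA ha) hab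
    exact Finset.disjoint_left.1 (hMd hA hB hAB) ha hb
  refine ⟨M.image (Finset.image f), ?_, ?_, ?_⟩
  · intro B hB
    obtain ⟨A, hA, rfl⟩ := mem_image.1 hB
    have hmA : StrictMonoOn f A := hmono.mono (by exact_mod_cast hsub A hA)
    have himg : A.image f ⊆ ground N \ X := by
      intro x hx
      obtain ⟨a, ha, rfl⟩ := mem_image.1 hx
      exact hmem a (hsub A hA ha)
    rw [mem_filter]
    refine ⟨hshift A (hM A hA).1 _ ?_ (canShiftTo_image A f hmA fun a ha => hle a (hsub A hA ha)),
      ?_, himg⟩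
    · intro h0
      have := himg h0
      simp [ground] at this
    · rw [card_image_of_injOn hmA.injOn, (hM A hA).2.1]
  · rw [card_image_of_injOn, hMr]
    -- Distinct members have disjoint images, which are nonempty because `0 < m`.
    intro A hA B hB hAB
    by_contra hne
    have hd := hdisj A hA B hB hne
    have hAB' : A.image f = B.image f := hAB
    rw [← hAB', disjoint_self, bot_eq_empty, image_eq_empty] at hd
    have := (hM A hA).2.1
    simp [hd] at this
    omega
  · intro S hS T hT hST
    obtain ⟨A, hA, rfl⟩ := mem_image.1 (mem_coe.1 hS)
    obtain ⟨B, hB, rfl⟩ := mem_image.1 (mem_coe.1 hT)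
    exact hdisj A hA B hB (fun h => hST (by rw [h]))

theorem stmt_11 (m s c d : ℕ) (hm : 2 ≤ m) (hc : 0 < c) (hcs : c ≤ s)
    (hl : 1 ≤ s - c) (hd : d + m * (s - c) ≤ m * s + c)
    (F : Finset (Finset ℕ)) (hF : F ⊆ (ground (m * s + c)).powerset)
    (hshift : IsShifted F) (hdel : d < delNum (m * s + c) m (s - c) F) :
    ∀ k : ℕ, m * k ≤ d → ∀ X ⊆ ground (d + m * (s - c)), X.card = d - k * m →
      HasMatching
        (F.filter (fun A => A.card = m ∧ A ⊆ ground (d + m * (s - c)) \ X))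
        (s - c + k) := by
  classical
  intro k
  induction k with
  | zero =>
    intro _ X hX hXc
    have hXd : X.card = d := by simpa using hXc
    rw [Nat.add_zero]
    refine matching_compress F hshift (m * s + c) _ m (s - c) (by omega) X hX (by omega) ?_
    by_contra hno
    refine absurd hdel (not_lt.2 (Nat.sInf_le ⟨X, ?_, hXd, hno⟩))
    exact hX.trans (Finset.Icc_subset_Icc_right hd)
  | succ k ih =>
    intro hk X hX hXc
    have hk' : m * k + m ≤ d := by simpa [Nat.mul_succ] using hk
    have hXc' : X.card + m = d - k * m := by
      rw [hXc, Nat.succ_mul, mul_comm k m]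
      omega
    have hml : m ≤ m * (s - c) := Nat.le_mul_of_pos_right m hl
    have hextend : ∃ Y ∈ F, Y.card = m ∧ Y ⊆ ground (d + m * (s - c)) \ X := by
      obtain ⟨Z, hZ, hZc⟩ : ∃ Z ⊆ ground (d + m * (s - c)) \ X, Z.card = m := by
        apply exists_subset_card_eq
        rw [card_sdiff_of_subset hX]
        simp only [ground, Nat.card_Icc]
        omega
      have hXZ : Disjoint X Z := (disjoint_of_subset_left hZ sdiff_disjoint).symm
      obtain ⟨M, hMF, hMr, -⟩ := ih (by omega) (X ∪ Z)
        (union_subset hX (hZ.trans sdiff_subset))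
        (by rw [card_union_of_disjoint hXZ]; omega)
      obtain ⟨Y, hY⟩ : M.Nonempty := card_pos.1 (by omega)
      have := mem_filter.1 (hMF hY)
      exact ⟨Y, this.1, this.2.1, this.2.2.trans (sdiff_subset_sdiff subset_rfl subset_union_left)⟩
    obtain ⟨Y, hYF, hYc, hY⟩ := hextend
    have hXY : Disjoint X Y := (disjoint_of_subset_left hY sdiff_disjoint).symm
    obtain ⟨M, hMF, hMr, hMd⟩ := ih (by omega) (X ∪ Y)
      (union_subset hX (hY.trans sdiff_subset))
      (by rw [card_union_of_disjoint hXY]; omega)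
    have hM : ∀ A ∈ M, A ∈ F ∧ A.card = m ∧ A ⊆ ground (d + m * (s - c)) \ (X ∪ Y) :=
      fun A hA => mem_filter.1 (hMF hA)
    have hYA : ∀ A ∈ M, Disjoint Y A := fun A hA =>
      (disjoint_of_subset_left (hM A hA).2.2
        (disjoint_of_subset_right subset_union_right sdiff_disjoint)).symm
    have hYM : Y ∉ M := by
      intro h
      have h0 := hYA Y h
      rw [disjoint_self, bot_eq_empty] at h0
      simp [h0] at hYc
      omega
    refine ⟨insert Y M, ?_, ?_, ?_⟩
    · intro A hA
      rcases mem_insert.1 hA with rfl | hA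
      · exact mem_filter.2 ⟨hYF, hYc, hY⟩
      · exact mem_filter.2 ⟨(hM A hA).1, (hM A hA).2.1,
          (hM A hA).2.2.trans (sdiff_subset_sdiff subset_rfl subset_union_left)⟩
    · rw [card_insert_of_notMem hYM, hMr]
      omega
    · rw [coe_insert]
      exact hMd.insert fun A hA _ => hYA A hA
end
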